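/- arXiv:2603.03861 — 7 statements merged into one kernel-verified Lean document; each statement's English description precedes it below -/
import Mathlib

section
/- Let a = p/q ∈ (0,1) be rational and let δ ∈ (0,1). Then there exist constants c, C > 0 depending only on a and δ such that for all sufficiently large n, writing d = 2^n and k = ⌊d^δ⌋, one has c·d^{a+δ(1−a)} ≤ log₂ a_{n,k} ≤ C·d^{a+δ(1−a)}. (This is Theorem 1.5, part 1: the asymptotics of the number of ⌊d^δ⌋-dimensional faces of the basic Hanner polytope P_n^a ⊂ ℝ^d.) -/
/-- `A_a = {⌊n/a⌋ : n ∈ ℕ, n ≥ 1}`, the set of floors of positive multiples of `1/a`. -/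
def Aset (a : ℝ) : Set ℕ := {m | ∃ n : ℕ, 1 ≤ n ∧ m = ⌊(n : ℝ) / a⌋₊}

/-- The generating function `F_n(t) = ∑_k a_{n,k} t^k` of the face numbers of the basic
Hanner-type polytopes: `F_0 = t + 2`, and `F_{n+1} = F_n ^ 2` for `n ∈ A_a` (product
step), `F_{n+1} = t·F_n ^ 2 + 2·F_n` for `n ∉ A_a` (convex hull step).
The coefficient `a_{n,k}` is `(F a n).coeff k`. -/
noncomputable def F (a : ℝ) : ℕ → Polynomial ℤ
  | 0 => Polynomial.X + 2
  | n + 1 =>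
      haveI := Classical.propDecidable (n ∈ Aset a)
      if n ∈ Aset a then F a n ^ 2
      else Polynomial.X * F a n ^ 2 + 2 * F a n

open Polynomial in
theorem F_zero' (a : ℝ) : F a 0 = X + 2 := by rw [F]

open Polynomial in
theorem F_succ_mem (a : ℝ) (n : ℕ) (h : n ∈ Aset a) : F a (n+1) = F a n ^ 2 := by
  rw [F]; simp [h]

open Polynomial in
theorem F_succ_not (a : ℝ) (n : ℕ) (h : n ∉ Aset a) :
    F a (n+1) = X * F a n ^ 2 + 2 * F a n := by
  rw [F]; simp [h]

open Classical in
/-- exponent of the constant coefficient -/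
noncomputable def vv (a : ℝ) : ℕ → ℕ
  | 0 => 1
  | n + 1 => if n ∈ Aset a then 2 * vv a n else vv a n + 1

open Classical in
/-- upper exponent -/
noncomputable def uu (a : ℝ) : ℕ → ℕ
  | 0 => 2
  | n + 1 => if n ∈ Aset a then 2 * uu a n else uu a n + 2

theorem coeff_sq_ge (P : Polynomial ℤ) (hP : ∀ k, 0 ≤ P.coeff k) (i j : ℕ) :
    P.coeff i * P.coeff j ≤ (P ^ 2).coeff (i + j) := by
  rw [pow_two, Polynomial.coeff_mul]
  exact Finset.single_le_sum (f := fun x : ℕ × ℕ => P.coeff x.1 * P.coeff x.2)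
    (fun x _ => mul_nonneg (hP _) (hP _)) (a := (i, j)) (by simp)

theorem coeff_sq_nonneg (P : Polynomial ℤ) (hP : ∀ k, 0 ≤ P.coeff k) (i : ℕ) :
    0 ≤ (P ^ 2).coeff i := by
  rw [pow_two, Polynomial.coeff_mul]
  exact Finset.sum_nonneg (fun x _ => mul_nonneg (hP _) (hP _))

theorem coeff_step_zero (P : Polynomial ℤ) :
    (Polynomial.X * P ^ 2 + 2 * P).coeff 0 = 2 * P.coeff 0 := by
  simp [Polynomial.mul_coeff_zero]

theorem coeff_step_succ (P : Polynomial ℤ) (k : ℕ) :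
    (Polynomial.X * P ^ 2 + 2 * P).coeff (k+1) = (P^2).coeff k + 2 * P.coeff (k+1) := by
  rw [Polynomial.coeff_add, Polynomial.coeff_X_mul, Polynomial.coeff_ofNat_mul]

theorem F_nonneg (a : ℝ) (n : ℕ) : ∀ k, 0 ≤ (F a n).coeff k := by
  induction n with
  | zero =>
    intro k
    rw [F_zero']
    rcases k with _ | _ | k <;> simp [Polynomial.coeff_X, Polynomial.coeff_ofNat_succ]
  | succ n ih =>
    intro k
    by_cases h : n ∈ Aset a
    · rw [F_succ_mem a n h]; exact coeff_sq_nonneg _ ih k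
    · rw [F_succ_not a n h]
      rcases k with _ | k
      · rw [coeff_step_zero]; linarith [ih 0]
      · rw [coeff_step_succ]; linarith [ih (k+1), coeff_sq_nonneg _ ih k]

theorem F_coeff_zero (a : ℝ) (n : ℕ) : (F a n).coeff 0 = 2 ^ vv a n := by
  induction n with
  | zero => simp [F_zero', vv]
  | succ n ih =>
    by_cases h : n ∈ Aset a
    · rw [F_succ_mem a n h, vv, if_pos h, pow_two, Polynomial.mul_coeff_zero, ih]; ring
    · rw [F_succ_not a n h, vv, if_neg h, coeff_step_zero, ih]; ring

theorem F_full (a : ℝ) (n : ℕ) : ∀ k, k ≤ 2 ^ n → 1 ≤ (F a n).coeff k := by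
  induction n with
  | zero =>
    intro k hk
    rw [F_zero']
    have : k = 0 ∨ k = 1 := by simp at hk; omega
    rcases this with rfl | rfl <;> simp [Polynomial.coeff_X, Polynomial.coeff_ofNat_succ]
  | succ n ih =>
    have key : ∀ k, k ≤ 2 ^ (n+1) → 1 ≤ (F a n ^ 2).coeff k := by
      intro k hk
      rw [pow_succ] at hk
      have h1 := ih (k/2) (by omega)
      have h2 := ih (k - k/2) (by omega)
      have h3 := coeff_sq_ge _ (F_nonneg a n) (k/2) (k - k/2)
      rw [show k/2 + (k - k/2) = k by omega] at h3
      nlinarith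
    intro k hk
    by_cases h : n ∈ Aset a
    · rw [F_succ_mem a n h]; exact key k hk
    · rw [F_succ_not a n h]
      rcases k with _ | k
      · rw [coeff_step_zero]; linarith [ih 0 (by positivity)]
      · rw [coeff_step_succ]; linarith [F_nonneg a n (k+1), key k (by omega)]

theorem F_lower (a : ℝ) (j s : ℕ) : ∀ r, 2 ^ (s+1) - 1 ≤ r → r ≤ 2 ^ (j + s) →
    ((2:ℤ) ^ vv a j) ^ (2 ^ s) ≤ (F a (j + 1 + s)).coeff r := by
  induction s with
  | zero =>
    intro r hr1 hr2
    simp only [pow_zero, pow_one, add_zero] at *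
    have key : ∀ r, r ≤ 2 ^ j → (2:ℤ) ^ vv a j ≤ (F a j ^ 2).coeff r := by
      intro r hr
      have h1 := F_full a j r hr
      have h3 := coeff_sq_ge _ (F_nonneg a j) 0 r
      rw [F_coeff_zero, zero_add] at h3
      have : (0:ℤ) < 2 ^ vv a j := by positivity
      nlinarith
    by_cases h : j ∈ Aset a
    · rw [F_succ_mem a j h]; exact key r hr2
    · rw [F_succ_not a j h]
      obtain ⟨k, rfl⟩ : ∃ k, r = k + 1 := ⟨r - 1, by omega⟩
      rw [coeff_step_succ]; linarith [F_nonneg a j (k+1), key k (by omega)]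
  | succ s ih =>
    intro r hr1 hr2
    have key : ∀ r, 2 ^ (s+1+1) - 2 ≤ r → r ≤ 2 ^ (j+(s+1)) →
        ((2:ℤ) ^ vv a j) ^ (2 ^ (s+1)) ≤ (F a (j+1+s) ^ 2).coeff r := by
      intro r hr hr2
      rw [pow_succ] at hr
      rw [← add_assoc, pow_succ] at hr2
      have h1 := ih (r/2) (by omega) (by omega)
      have h2 := ih (r - r/2) (by omega) (by omega)
      have h3 := coeff_sq_ge _ (F_nonneg a (j+1+s)) (r/2) (r - r/2)
      rw [show r/2 + (r - r/2) = r by omega] at h3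
      refine le_trans ?_ h3
      rw [pow_succ 2 s, pow_mul, pow_two]
      exact mul_le_mul h1 h2 (by positivity) (F_nonneg _ _ _)
    rw [show j + 1 + (s+1) = (j+1+s)+1 by ring]
    have h4 : 2 ≤ 2 ^ (s+1+1) := by rw [pow_succ]; have := Nat.one_le_two_pow (n := s+1); omega
    by_cases h : j+1+s ∈ Aset a
    · rw [F_succ_mem a _ h]; exact key r (by omega) hr2
    · rw [F_succ_not a _ h]
      obtain ⟨k, rfl⟩ : ∃ k, r = k + 1 := ⟨r - 1, by omega⟩
      rw [coeff_step_succ]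
      linarith [F_nonneg a (j+1+s) (k+1), key k (by omega) (by omega)]

/-- real evaluation -/
noncomputable def Fe (a x : ℝ) (n : ℕ) : ℝ := Polynomial.aeval x (F a n)

theorem Fe_zero (a x : ℝ) : Fe a x 0 = x + 2 := by
  have h2 : Polynomial.aeval x (2 : Polynomial ℤ) = 2 := map_ofNat _ 2
  simp [Fe, F_zero', h2]

theorem Fe_mem (a x : ℝ) (n : ℕ) (h : n ∈ Aset a) : Fe a x (n+1) = Fe a x n ^ 2 := by
  simp [Fe, F_succ_mem a n h]

theorem Fe_not (a x : ℝ) (n : ℕ) (h : n ∉ Aset a) :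
    Fe a x (n+1) = x * Fe a x n ^ 2 + 2 * Fe a x n := by
  have h2 : Polynomial.aeval x (2 : Polynomial ℤ) = 2 := map_ofNat _ 2
  simp [Fe, F_succ_not a n h, h2]

theorem Fe_one_le (a x : ℝ) (hx : 0 ≤ x) (n : ℕ) : 1 ≤ Fe a x n := by
  induction n with
  | zero => rw [Fe_zero]; linarith
  | succ n ih =>
    by_cases h : n ∈ Aset a
    · rw [Fe_mem _ _ _ h]; nlinarith
    · rw [Fe_not _ _ _ h]; nlinarith [mul_nonneg hx (sq_nonneg (Fe a x n))]

theorem coeff_le_Fe (a x : ℝ) (hx : 0 ≤ x) (n k : ℕ) :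
    ((F a n).coeff k : ℝ) * x ^ k ≤ Fe a x n := by
  by_cases hk : k ≤ (F a n).natDegree
  · rw [Fe, Polynomial.aeval_eq_sum_range]
    have := Finset.single_le_sum (f := fun i => (F a n).coeff i • x ^ i)
      (s := Finset.range ((F a n).natDegree + 1))
      (fun i _ => by
        rw [zsmul_eq_mul]
        exact mul_nonneg (by exact_mod_cast F_nonneg a n i) (pow_nonneg hx i))
      (a := k) (by simp; omega)
    simpa [zsmul_eq_mul] using this
  · rw [Polynomial.coeff_eq_zero_of_natDegree_lt (by omega)]
    have := Fe_one_le a x hx n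
    simp; linarith

theorem uu_mono (a : ℝ) : Monotone (uu a) := by
  apply monotone_nat_of_le_succ
  intro n
  rw [uu]; split_ifs <;> omega

theorem Fe_low (a x : ℝ) (J : ℕ) (hx : 0 ≤ x) (hxJ : x * 2 ^ uu a J ≤ 1) (j : ℕ) (hj : j ≤ J) :
    Fe a x j ≤ 2 ^ uu a j := by
  induction j with
  | zero =>
    rw [Fe_zero, uu]
    have : (1:ℝ) ≤ 2 ^ uu a J := one_le_pow₀ (by norm_num)
    nlinarith
  | succ j ih =>
    have ih := ih (by omega)
    have h1 := Fe_one_le a x hx j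
    by_cases h : j ∈ Aset a
    · rw [Fe_mem _ _ _ h, uu, if_pos h, mul_comm, pow_mul]
      gcongr
    · rw [Fe_not _ _ _ h, uu, if_neg h, pow_add]
      have h2 : (2:ℝ) ^ uu a j ≤ 2 ^ uu a J :=
        pow_le_pow_right₀ (by norm_num) (uu_mono a (by omega))
      have h3 : x * Fe a x j ≤ 1 := le_trans (mul_le_mul_of_nonneg_left (ih.trans h2) hx) hxJ
      nlinarith

theorem Fe_high (a x : ℝ) (hx : 0 ≤ x) (hx1 : x ≤ 1) (J s : ℕ) :
    3 * Fe a x (J + s) ≤ (3 * Fe a x J) ^ (2 ^ s) := by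
  induction s with
  | zero => simp
  | succ s ih =>
    have h1 := Fe_one_le a x hx (J+s)
    have h2 : 3 * Fe a x (J + s + 1) ≤ (3 * Fe a x (J+s)) ^ 2 := by
      by_cases h : J + s ∈ Aset a
      · rw [Fe_mem _ _ _ h]; nlinarith
      · rw [Fe_not _ _ _ h]; nlinarith [mul_le_mul_of_nonneg_right hx1 (sq_nonneg (Fe a x (J+s)))]
    rw [pow_succ 2 s, pow_mul, ← add_assoc]
    refine h2.trans ?_
    gcongr

theorem coeff_upper (a : ℝ) (J s k : ℕ) :
    ((F a (J + s)).coeff k : ℝ) ≤ 2 ^ (uu a J * k + (uu a J + 2) * 2 ^ s) := by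
  set T := uu a J with hT
  set x : ℝ := (1/2) ^ T with hxd
  have hx : 0 ≤ x := by positivity
  have hx1 : x ≤ 1 := pow_le_one₀ (by norm_num) (by norm_num)
  have hxT : x * 2 ^ T = 1 := by rw [hxd, ← mul_pow]; norm_num
  have h1 := coeff_le_Fe a x hx (J+s) k
  have h2 := Fe_high a x hx hx1 J s
  have h3 := Fe_low a x J hx hxT.le J le_rfl
  have h4 := Fe_one_le a x hx (J+s)
  have h5 : Fe a x (J+s) ≤ 2 ^ ((T+2) * 2 ^ s) := by
    calc Fe a x (J+s) ≤ 3 * Fe a x (J+s) := by linarith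
      _ ≤ _ := h2
      _ ≤ (2 ^ (T+2)) ^ (2^s) := by
        have := Fe_one_le a x hx J
        apply pow_le_pow_left₀ (by linarith)
        rw [pow_add]; nlinarith
      _ = _ := by rw [← pow_mul]
  have h6 : ((F a (J+s)).coeff k : ℝ) = ((F a (J+s)).coeff k : ℝ) * x ^ k * 2 ^ (T * k) := by
    rw [mul_assoc, pow_mul, ← mul_pow, hxT]; simp
  rw [h6, pow_add, mul_comm]
  gcongr
  exact h1.trans h5

theorem ceil_mem (a : ℝ) (ha : 0 < a) (n : ℕ) (h : n ∈ Aset a) :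
    ⌈(n:ℝ) * a⌉₊ + 1 ≤ ⌈((n+1 : ℕ):ℝ) * a⌉₊ := by
  obtain ⟨m, hm, hn⟩ := h
  have h0 : (0:ℝ) ≤ m / a := by positivity
  have h1 := Nat.floor_le h0
  have h2 := Nat.lt_floor_add_one ((m:ℝ)/a)
  rw [← hn] at h1 h2
  rw [le_div_iff₀ ha] at h1
  rw [div_lt_iff₀ ha] at h2
  have h3 : ⌈(n:ℝ) * a⌉₊ ≤ m := Nat.ceil_le.2 h1
  have h4 : m < ⌈((n+1 : ℕ):ℝ) * a⌉₊ := Nat.lt_ceil.2 (by push_cast; exact h2)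
  omega

theorem ceil_not (a : ℝ) (ha : 0 < a) (n : ℕ) (hn : 1 ≤ n) (h : n ∉ Aset a) :
    ⌈((n+1 : ℕ):ℝ) * a⌉₊ ≤ ⌈(n:ℝ) * a⌉₊ := by
  by_contra hc
  push Not at hc
  apply h
  have hn' : (1:ℝ) ≤ n := by exact_mod_cast hn
  refine ⟨⌈(n:ℝ) * a⌉₊, Nat.ceil_pos.2 (by positivity), ?_⟩
  rw [Nat.lt_ceil] at hc
  symm
  rw [Nat.floor_eq_iff (by positivity), le_div_iff₀ ha, div_lt_iff₀ ha]
  push_cast at hc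
  exact ⟨Nat.le_ceil _, hc⟩

theorem ceil_succ_le (a : ℝ) (ha : a < 1) (n : ℕ) :
    ⌈((n+1 : ℕ):ℝ) * a⌉₊ ≤ ⌈(n:ℝ) * a⌉₊ + 1 := by
  rw [Nat.ceil_le]
  have := Nat.le_ceil ((n:ℝ) * a)
  push_cast
  linarith

theorem vv_lower (a : ℝ) (ha : 0 < a) (ha1 : a < 1) (n : ℕ) :
    2 ^ ⌈(n:ℝ) * a⌉₊ ≤ 2 * vv a n := by
  induction n with
  | zero => simp [vv]
  | succ n ih =>
    have h1 := ceil_succ_le a ha1 n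
    by_cases h : n ∈ Aset a
    · rw [vv, if_pos h]
      have := Nat.pow_le_pow_right (n := 2) (by norm_num) h1
      rw [pow_succ] at this
      omega
    · rw [vv, if_neg h]
      rcases Nat.eq_zero_or_pos n with rfl | hn
      · have := Nat.pow_le_pow_right (n := 2) (by norm_num) h1
        simp [vv] at this ⊢
        omega
      · have := Nat.pow_le_pow_right (n := 2) (by norm_num) (ceil_not a ha n hn h)
        omega

theorem uu_upper (a : ℝ) (ha : 0 < a) :
    ∃ K : ℝ, 0 < K ∧ ∀ n : ℕ, (uu a n : ℝ) ≤ K * 2 ^ ⌈(n:ℝ) * a⌉₊ := by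
  set ρ : ℝ := (2:ℝ) ^ (-a) with hρ
  have hρ0 : 0 < ρ := by positivity
  have hρ1 : ρ < 1 := Real.rpow_lt_one_of_one_lt_of_neg (by norm_num) (by linarith)
  set L : ℝ := 2 / (1 - ρ) with hL
  have hL0 : 0 < L := div_pos (by norm_num) (by linarith)
  have hLρ : L * (1 - ρ) = 2 := div_mul_cancel₀ _ (by linarith)
  have hpow : ∀ n : ℕ, ρ ^ n ≤ 1 := fun n => pow_le_one₀ hρ0.le hρ1.le
  have hone : ∀ n : ℕ, 1 ≤ (2:ℝ) ^ ⌈(n:ℝ) * a⌉₊ * ρ ^ n := by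
    intro n
    rw [hρ, ← Real.rpow_natCast, ← Real.rpow_natCast, ← Real.rpow_mul (by norm_num),
      ← Real.rpow_add (by norm_num)]
    apply Real.one_le_rpow (by norm_num)
    have := Nat.le_ceil ((n:ℝ) * a)
    linarith
  have main : ∀ n : ℕ, (uu a n : ℝ) ≤ 2 ^ ⌈(n:ℝ) * a⌉₊ * (L + 2 - L * ρ ^ n) := by
    intro n
    induction n with
    | zero => simp [uu]
    | succ n ih =>
      have hp1 := hpow n
      have hp2 := hpow (n+1)
      have hpp : 0 < ρ ^ n := by positivity
      have hps : ρ ^ (n+1) ≤ ρ ^ n := pow_le_pow_of_le_one hρ0.le hρ1.le (by omega)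
      by_cases h : n ∈ Aset a
      · have hc : (2:ℝ) ^ (⌈(n:ℝ) * a⌉₊ + 1) ≤ 2 ^ ⌈((n+1:ℕ):ℝ) * a⌉₊ :=
          pow_le_pow_right₀ (by norm_num) (ceil_mem a ha n h)
        rw [uu, if_pos h]
        simp only [Nat.cast_mul, Nat.cast_ofNat]
        calc 2 * (uu a n : ℝ) ≤ 2 * (2 ^ ⌈(n:ℝ) * a⌉₊ * (L + 2 - L * ρ ^ n)) := by linarith
          _ = 2 ^ (⌈(n:ℝ) * a⌉₊ + 1) * (L + 2 - L * ρ ^ n) := by ring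
          _ ≤ _ := by
            apply mul_le_mul hc _ _ (by positivity)
            · nlinarith
            · nlinarith
      · have hc : (2:ℝ) ^ (⌈(n:ℝ) * a⌉₊) ≤ 2 ^ ⌈((n+1:ℕ):ℝ) * a⌉₊ := by
          apply pow_le_pow_right₀ (by norm_num)
          apply Nat.ceil_mono
          push_cast
          nlinarith
        rw [uu, if_neg h, Nat.cast_add (uu a n) 2, Nat.cast_ofNat]
        have h1 := hone n
        calc (uu a n : ℝ) + 2 ≤ (2 ^ ⌈(n:ℝ) * a⌉₊ * (L + 2 - L * ρ ^ n)) +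
              (2 ^ ⌈(n:ℝ) * a⌉₊ * ρ ^ n) * (L * (1 - ρ)) := by rw [hLρ]; linarith
          _ = 2 ^ (⌈(n:ℝ) * a⌉₊) * (L + 2 - L * ρ ^ (n+1)) := by ring
          _ ≤ _ := by
            apply mul_le_mul_of_nonneg_right hc
            nlinarith
  refine ⟨L + 2, by linarith, fun n => (main n).trans ?_⟩
  rw [mul_comm]
  apply mul_le_mul_of_nonneg_right _ (by positivity)
  have : 0 < L * ρ ^ n := by positivity
  linarith

/-- **Theorem 1.5, part 1.** For rational `a = p/q ∈ (0,1)` and `δ ∈ (0,1)` there are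
constants `c, C > 0` (depending only on `a` and `δ`) such that for all large `n`,
with `d = 2^n` and `k = ⌊d^δ⌋`,
`c·d^(a+δ(1-a)) ≤ log₂ a_{n,k} ≤ C·d^(a+δ(1-a))`. -/
theorem face_number_asymptotics_rational
    (p q : ℕ) (hp : 0 < p) (hpq : p < q) (a : ℝ) (ha : a = (p : ℝ) / q)
    (δ : ℝ) (hδ : δ ∈ Set.Ioo (0 : ℝ) 1) :
    ∃ c C : ℝ, 0 < c ∧ 0 < C ∧ ∃ N : ℕ, ∀ n : ℕ, N ≤ n →
      c * ((2 : ℝ) ^ n) ^ (a + δ * (1 - a)) ≤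
          Real.logb 2 (((F a n).coeff ⌊((2 : ℝ) ^ n) ^ δ⌋₊ : ℝ)) ∧
      Real.logb 2 (((F a n).coeff ⌊((2 : ℝ) ^ n) ^ δ⌋₊ : ℝ)) ≤
          C * ((2 : ℝ) ^ n) ^ (a + δ * (1 - a)) := by
  have hq : (0:ℝ) < q := by exact_mod_cast (hp.trans hpq)
  have hp' : (0:ℝ) < p := by exact_mod_cast hp
  have ha0 : 0 < a := by rw [ha]; positivity
  have ha1 : a < 1 := by rw [ha, div_lt_one hq]; exact_mod_cast hpq
  clear ha
  obtain ⟨hδ0, hδ1⟩ := hδ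
  obtain ⟨K, hK, hu⟩ := uu_upper a ha0
  refine ⟨1/8, 16 * K + 4, by norm_num, by linarith, ⌈1/δ⌉₊ + ⌈1/(1-δ)⌉₊, fun n hn => ?_⟩
  have hn1 : 1 ≤ δ * n := by
    have h1 := Nat.le_ceil (1/δ)
    have h2 : ((⌈1/δ⌉₊ : ℕ) : ℝ) ≤ n := by exact_mod_cast (by omega : ⌈1/δ⌉₊ ≤ n)
    rw [← div_le_iff₀' hδ0]; linarith
  have hn2 : 1 ≤ (1 - δ) * n := by
    have h1 := Nat.le_ceil (1/(1-δ))
    have h2 : ((⌈1/(1-δ)⌉₊ : ℕ) : ℝ) ≤ n := by exact_mod_cast (by omega : ⌈1/(1-δ)⌉₊ ≤ n)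
    rw [← div_le_iff₀' (by linarith)]; linarith
  have hd : ∀ y : ℝ, ((2:ℝ) ^ n) ^ y = 2 ^ ((n:ℝ) * y) := by
    intro y
    rw [← Real.rpow_natCast, ← Real.rpow_mul (by norm_num)]
  rw [hd, hd]
  obtain ⟨m, hm⟩ : ∃ m, m = ⌊δ * n⌋₊ := ⟨_, rfl⟩
  have hm1 : (m:ℝ) ≤ δ * n := by rw [hm]; exact Nat.floor_le (by positivity)
  have hm2 : δ * n < m + 1 := by rw [hm]; exact Nat.lt_floor_add_one _
  have hm3 : 1 ≤ m := by rw [hm]; exact Nat.le_floor (by simpa using hn1)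
  have hmn : m ≤ n := by
    have : (m:ℝ) ≤ n := by nlinarith
    exact_mod_cast this
  obtain ⟨s, rfl⟩ : ∃ s, m = s + 1 := ⟨m - 1, by omega⟩
  obtain ⟨j, rfl⟩ : ∃ j, n = j + (s + 1) := ⟨n - (s+1), by omega⟩
  set n := j + (s+1) with hnd
  have hnj : (n:ℝ) = j + (s + 1) := by rw [hnd]; push_cast; ring
  push_cast at hm1 hm2
  set k := ⌊(2:ℝ) ^ ((n:ℝ) * δ)⌋₊ with hk
  have hk1 : (k:ℝ) ≤ 2 ^ ((n:ℝ) * δ) := Nat.floor_le (by positivity)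
  have hk2 : 2 ^ (s+1) ≤ k := by
    apply Nat.le_floor
    push_cast
    rw [← Real.rpow_natCast]
    apply Real.rpow_le_rpow_of_exponent_le (by norm_num)
    push_cast; linarith
  have hk3 : k ≤ 2 ^ (j + s) := by
    have : (k:ℝ) ≤ 2 ^ (j+s) := by
      refine hk1.trans ?_
      rw [← Real.rpow_natCast]
      apply Real.rpow_le_rpow_of_exponent_le (by norm_num)
      push_cast; nlinarith
    exact_mod_cast this
  have hlow := F_lower a j s k (by omega) hk3
  rw [show j + 1 + s = n by omega] at hlow
  have hup := coeff_upper a j (s+1) k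
  rw [← hnd] at hup
  set A := (F a n).coeff k
  have hlow' : ((2:ℝ) ^ vv a j) ^ (2 ^ s) ≤ (A : ℝ) := by exact_mod_cast hlow
  have hApos : 0 < (A:ℝ) := lt_of_lt_of_le (by positivity) hlow'
  have hlog : ∀ N : ℕ, Real.logb 2 ((2:ℝ) ^ N) = N := by
    intro N
    rw [← Real.rpow_natCast, Real.logb_rpow (by norm_num) (by norm_num)]
  constructor
  · have h1 := Real.logb_le_logb_of_le (b := 2) (by norm_num) (by positivity) hlow'
    rw [← pow_mul, hlog] at h1
    refine le_trans ?_ h1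
    have hv : (2:ℝ) ^ ⌈(j:ℝ) * a⌉₊ ≤ 2 * vv a j := by exact_mod_cast vv_lower a ha0 ha1 j
    have hc : (2:ℝ) ^ ((j:ℝ) * a) ≤ 2 ^ ⌈(j:ℝ) * a⌉₊ := by
      rw [← Real.rpow_natCast]
      exact Real.rpow_le_rpow_of_exponent_le (by norm_num) (Nat.le_ceil _)
    have he : (2:ℝ) ^ ((n:ℝ) * (a + δ * (1 - a))) ≤ 2 ^ ((j:ℝ) * a) * 2 ^ s * 4 := by
      rw [show (4:ℝ) = 2 ^ (2:ℝ) by norm_num, ← Real.rpow_natCast 2 s,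
        ← Real.rpow_add (by norm_num), ← Real.rpow_add (by norm_num)]
      apply Real.rpow_le_rpow_of_exponent_le (by norm_num)
      nlinarith
    push_cast
    have : (0:ℝ) < 2 ^ s := by positivity
    nlinarith
  · have h1 := Real.logb_le_logb_of_le (b := 2) (by norm_num) hApos hup
    rw [hlog] at h1
    refine h1.trans ?_
    have hU := hu j
    have hc : (2:ℝ) ^ ⌈(j:ℝ) * a⌉₊ ≤ 2 ^ ((j:ℝ) * a) * 2 := by
      rw [← Real.rpow_natCast]
      rw [← Real.rpow_add_one (by norm_num)]
      exact Real.rpow_le_rpow_of_exponent_le (by norm_num) (Nat.ceil_lt_add_one (by positivity)).le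
    have he : (2:ℝ) ^ ((j:ℝ) * a) * 2 ^ ((n:ℝ) * δ) ≤ 2 * 2 ^ ((n:ℝ) * (a + δ * (1 - a))) := by
      rw [mul_comm 2, ← Real.rpow_add_one (by norm_num), ← Real.rpow_add (by norm_num)]
      apply Real.rpow_le_rpow_of_exponent_le (by norm_num)
      nlinarith
    have hs : (2:ℝ) ^ (s+1) ≤ 2 ^ ((n:ℝ) * δ) := by
      refine le_trans ?_ hk1
      exact_mod_cast hk2
    have hj1 : (1:ℝ) ≤ 2 ^ ((j:ℝ) * a) := Real.one_le_rpow (by norm_num) (by positivity)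
    have hU' : (uu a j : ℝ) ≤ K * 2 * 2 ^ ((j:ℝ) * a) := by nlinarith
    push_cast
    set D := (2:ℝ) ^ ((n:ℝ) * δ) with hD
    set Q := (2:ℝ) ^ ((j:ℝ) * a)
    have hDpos : 0 < D := by positivity
    have hU0 : (0:ℝ) ≤ uu a j := by positivity
    calc (uu a j : ℝ) * k + (uu a j + 2) * 2 ^ (s+1)
        ≤ uu a j * D + (uu a j + 2) * D := by gcongr
      _ = (2 * uu a j + 2) * D := by ring
      _ ≤ (2 * (K * 2 * Q) + 2 * Q) * D := by gcongr; linarith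
      _ = (4 * K + 2) * (Q * D) := by ring
      _ ≤ (4 * K + 2) * (2 * 2 ^ ((n:ℝ) * (a + δ * (1 - a)))) := by gcongr
      _ ≤ _ := by
        have : (0:ℝ) < 2 ^ ((n:ℝ) * (a + δ * (1 - a))) := by positivity
        nlinarith [mul_pos hK this]
end

section
/- Let Q ≥ 1 and 0 ≤ p ≤ Q be integers, m ≥ 0, and k ≥ 1. Let T be a plane rooted tree in which every leaf is at depth exactly m, every internal vertex has at most 2^Q children, and the number of internal vertices whose number of children differs from 2^p is at most k. Then |L(T)| ≤ 2^{2Q+2} · 2^{p·m} · k^{1−p/Q}, where |L(T)| is the number of leaves of T and k^{1−p/Q} denotes the real power. (Lemma 4.4, with explicit constant.) -/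
/-- `𝒯_m^K`: plane rooted trees of height exactly `m` (every leaf at depth exactly `m`)
in which every internal vertex has its number of children in `K`. A tree of height `0`
is a single leaf, and a tree of height `m+1` is a root together with a `k`-tuple of
subtrees of height `m`, for some `k ∈ K`. -/
def TreeSet (K : Finset ℕ) : ℕ → Type
  | 0 => PUnit
  | m + 1 => Σ k : K, Fin (k : ℕ) → TreeSet K m

instance instTreeSetFintype (K : Finset ℕ) : (m : ℕ) → Fintype (TreeSet K m)
  | 0 => inferInstanceAs (Fintype PUnit)
  | m + 1 =>
      haveI := instTreeSetFintype K m
      inferInstanceAs (Fintype (Σ k : K, Fin (k : ℕ) → TreeSet K m))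

/-- `|L(T)|`, the number of leaves of the tree `T`. -/
def leaves (K : Finset ℕ) : (m : ℕ) → TreeSet K m → ℕ
  | 0, _ => 1
  | m + 1, T => ∑ i, leaves K m (T.2 i)

/-- `|Int(T)|`, the number of internal (non-leaf) vertices of the tree `T`. -/
def intCount (K : Finset ℕ) : (m : ℕ) → TreeSet K m → ℕ
  | 0, _ => 0
  | m + 1, T => 1 + ∑ i, intCount K m (T.2 i)

/-- `|V(T)|`, the total number of vertices of the tree `T`. -/
def vertCount (K : Finset ℕ) : (m : ℕ) → TreeSet K m → ℕ
  | 0, _ => 1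
  | m + 1, T => 1 + ∑ i, vertCount K m (T.2 i)

/-- The number of internal vertices of `T` whose number of children differs from `d`. -/
def qcount (K : Finset ℕ) (d : ℕ) : (m : ℕ) → TreeSet K m → ℕ
  | 0, _ => 0
  | m + 1, T => (if (T.1 : ℕ) ≠ d then 1 else 0) + ∑ i, qcount K d m (T.2 i)

/-- The weight `W(T) = ∏_{v ∈ Int(T)} C_{deg v}(t)` of a tree (equal to `1` when
`Int(T)` is empty). -/
noncomputable def weight (K : Finset ℕ) (Cf : ℕ → Polynomial ℤ) :
    (m : ℕ) → TreeSet K m → Polynomial ℤ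
  | 0, _ => 1
  | m + 1, T => Cf (T.1 : ℕ) * ∏ i, weight K Cf m (T.2 i)

theorem leaves_aux (Q p : ℕ) (hpQ : p ≤ Q) (m : ℕ) :
    ∀ (J : ℕ) (T : TreeSet (Finset.Icc 1 (2 ^ Q)) m),
      (2 ^ p) ^ J * leaves (Finset.Icc 1 (2 ^ Q)) m T ≤
        (2 ^ p) ^ m * ((2 ^ Q) ^ J + 2 ^ Q * qcount (Finset.Icc 1 (2 ^ Q)) (2 ^ p) m T) := by
  have hAB : 2 ^ p ≤ 2 ^ Q := Nat.pow_le_pow_right (by norm_num) hpQ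
  have hA : 1 ≤ 2 ^ p := Nat.one_le_two_pow
  induction m with
  | zero =>
    intro J T
    simpa [leaves, qcount] using Nat.pow_le_pow_left hAB J
  | succ m ih =>
    intro J T
    have hd : (T.1 : ℕ) ≤ 2 ^ Q := (Finset.mem_Icc.mp T.1.2).2
    simp only [leaves, qcount]
    generalize 2 ^ p = A at *
    have key : ∀ J : ℕ, A ^ J * ∑ i, leaves (Finset.Icc 1 (2 ^ Q)) m (T.2 i) ≤
        A ^ m * ((T.1 : ℕ) * (2 ^ Q) ^ J
          + 2 ^ Q * ∑ i, qcount (Finset.Icc 1 (2 ^ Q)) A m (T.2 i)) := by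
      intro J
      rw [Finset.mul_sum]
      refine (Finset.sum_le_sum fun i _ => ih J (T.2 i)).trans (le_of_eq ?_)
      rw [← Finset.mul_sum, Finset.sum_add_distrib, ← Finset.mul_sum]
      simp
    generalize (∑ i, leaves (Finset.Icc 1 (2 ^ Q)) m (T.2 i)) = L at *
    generalize (∑ i, qcount (Finset.Icc 1 (2 ^ Q)) A m (T.2 i)) = q at *
    generalize (T.1 : ℕ) = d at *
    generalize 2 ^ Q = B at *
    cases J with
    | zero =>
      refine (key 0).trans ?_
      rw [pow_succ, mul_assoc]
      apply Nat.mul_le_mul_left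
      by_cases h : d = A
      · subst h
        simp only [pow_zero, ne_eq, not_true_eq_false, if_false]
        nlinarith [Nat.zero_le (B * q), Nat.mul_le_mul_right (B * q) hA]
      · simp only [pow_zero, ne_eq, h, not_false_eq_true, if_true]
        nlinarith [Nat.mul_le_mul_right (1 + B * (1 + q)) hA]
    | succ J =>
      calc A ^ (J + 1) * L = A * (A ^ J * L) := by ring
        _ ≤ A * (A ^ m * (d * B ^ J + B * q)) := Nat.mul_le_mul_left _ (key J)
        _ = A ^ (m + 1) * (d * B ^ J + B * q) := by ring
        _ ≤ _ := by
          apply Nat.mul_le_mul_left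
          apply Nat.add_le_add
          · rw [pow_succ, mul_comm]
            exact Nat.mul_le_mul_left _ hd
          · exact Nat.mul_le_mul_left _ (Nat.le_add_left _ _)

/-- **Lemma 4.4** (with explicit constant). Let `T` be a plane rooted tree in which
every leaf is at depth exactly `m`, every internal vertex has at least one and at most
`2^Q` children, and the number of internal vertices whose number of children differs
from `2^p` is at most `k` (with `k ≥ 1`). Then
`|L(T)| ≤ 2^{2Q+2} · 2^{p·m} · k^{1-p/Q}`. -/
theorem leaves_upper_bound (Q p : ℕ) (hQ : 1 ≤ Q) (hpQ : p ≤ Q)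
    (m k : ℕ) (hk : 1 ≤ k)
    (T : TreeSet (Finset.Icc 1 (2 ^ Q)) m)
    (hq : qcount (Finset.Icc 1 (2 ^ Q)) (2 ^ p) m T ≤ k) :
    (leaves (Finset.Icc 1 (2 ^ Q)) m T : ℝ) ≤
      2 ^ (2 * Q + 2) * 2 ^ (p * m) * (k : ℝ) ^ (1 - (p : ℝ) / Q) := by
  have hB : 1 < 2 ^ Q := Nat.one_lt_two_pow (by omega)
  obtain ⟨J, hJ1, hJ2⟩ : ∃ J : ℕ, k ≤ (2 ^ Q) ^ J ∧ (2 ^ Q) ^ J ≤ 2 ^ Q * k := by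
    refine ⟨Nat.log (2 ^ Q) k + 1, (Nat.lt_pow_succ_log_self hB k).le, ?_⟩
    rw [pow_succ, mul_comm]
    exact Nat.mul_le_mul_left _ (Nat.pow_log_le_self _ (by omega))
  have h := leaves_aux Q p hpQ m J T
  generalize leaves (Finset.Icc 1 (2 ^ Q)) m T = L at *
  generalize qcount (Finset.Icc 1 (2 ^ Q)) (2 ^ p) m T = q at *
  have h2 : (2 ^ p) ^ J * L ≤ (2 ^ p) ^ m * (2 * 2 ^ Q * k) := by
    refine h.trans (Nat.mul_le_mul_left _ ?_)
    nlinarith [Nat.mul_le_mul_left (2 ^ Q) hq]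
  have h3 : ((2 : ℝ) ^ p) ^ J * L ≤ (2 ^ p) ^ m * (2 * 2 ^ Q * k) := by exact_mod_cast h2
  have hk0 : (0 : ℝ) < k := by exact_mod_cast hk
  have hQ0 : (Q : ℝ) ≠ 0 := by positivity
  have h4 : (k : ℝ) ^ ((p : ℝ) / Q) ≤ ((2 : ℝ) ^ p) ^ J := by
    have h5 : (k : ℝ) ≤ ((2 : ℝ) ^ Q) ^ J := by exact_mod_cast hJ1
    refine (Real.rpow_le_rpow hk0.le h5 (by positivity)).trans (le_of_eq ?_)
    rw [← pow_mul, ← pow_mul, ← Real.rpow_natCast, ← Real.rpow_natCast,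
      ← Real.rpow_mul (by norm_num)]
    congr 1
    push_cast
    field_simp
  rw [Real.rpow_sub hk0, Real.rpow_one, mul_div_assoc', le_div_iff₀ (by positivity)]
  have h6 : (L : ℝ) * (k : ℝ) ^ ((p : ℝ) / Q) ≤ (2 ^ p) ^ m * (2 * 2 ^ Q * k) := by
    refine le_trans ?_ h3
    rw [mul_comm]
    exact mul_le_mul_of_nonneg_right h4 (by positivity)
  refine h6.trans ?_
  have h7 : (2 : ℝ) * 2 ^ Q ≤ 2 ^ (2 * Q + 2) := by
    rw [← pow_succ']
    exact pow_le_pow_right₀ (by norm_num) (by omega)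
  rw [pow_mul]
  calc ((2 : ℝ) ^ p) ^ m * (2 * 2 ^ Q * k) = (2 * 2 ^ Q) * ((2 ^ p) ^ m * k) := by ring
    _ ≤ 2 ^ (2 * Q + 2) * ((2 ^ p) ^ m * k) := mul_le_mul_of_nonneg_right h7 (by positivity)
    _ = _ := by ring
end

section
/- Let Q ≥ 1, 0 ≤ p ≤ Q, and λ ≥ 1 be integers, let k ≥ 2λ be an integer, set h = ⌊log_{2^Q}(k/(2λ))⌋, and let m ≥ h. Then (2^Q)^h · (2^p)^{m−h} ≥ 2^{−Q} · (k/(2λ))^{1−p/Q} · 2^{p·m}, where (k/(2λ))^{1−p/Q} denotes the real power. (The leaf-count lower bound for the extremal tree, first part of Lemma 5.3.) -/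
/-- **The leaf-count lower bound for the extremal tree** (first part of Lemma 5.3).
For integers `Q ≥ 1`, `0 ≤ p ≤ Q`, `λ ≥ 1`, `k ≥ 2λ`, with
`h = ⌊log_{2^Q}(k/(2λ))⌋` and `m ≥ h`, the number
`(2^Q)^h · (2^p)^{m-h}` of leaves of the tree of height `m` in which every internal
vertex at depth `< h` has `2^Q` children and every internal vertex at depth `≥ h` has
`2^p` children satisfies
`(2^Q)^h · (2^p)^{m-h} ≥ 2^{-Q} · (k/(2λ))^{1-p/Q} · 2^{p·m}`. -/
theorem extremal_tree_leaf_bound (Q p lam k : ℕ) (hQ : 1 ≤ Q) (hpQ : p ≤ Q)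
    (hlam : 1 ≤ lam) (hk : 2 * lam ≤ k) (h m : ℕ)
    (hh : h = ⌊Real.logb ((2 : ℝ) ^ Q) ((k : ℝ) / (2 * lam))⌋₊) (hm : h ≤ m) :
    (2 : ℝ) ^ (-(Q : ℝ)) * ((k : ℝ) / (2 * lam)) ^ (1 - (p : ℝ) / Q) *
        (2 : ℝ) ^ (p * m) ≤
      ((2 : ℝ) ^ Q) ^ h * ((2 : ℝ) ^ p) ^ (m - h) := by
  have hQ' : (0 : ℝ) < Q := by exact_mod_cast hQ
  have hpQ' : (p : ℝ) ≤ Q := by exact_mod_cast hpQ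
  have hlam' : (0 : ℝ) < 2 * lam := by
    have : (1 : ℝ) ≤ lam := by exact_mod_cast hlam
    linarith
  have hk' : (2 * lam : ℝ) ≤ k := by exact_mod_cast hk
  set x : ℝ := (k : ℝ) / (2 * lam) with hx
  have hx0 : 0 < x := div_pos (by linarith) hlam'
  have hb : (1 : ℝ) < (2 : ℝ) ^ Q := one_lt_pow₀ (by norm_num) (by omega)
  have hlt : Real.logb ((2 : ℝ) ^ Q) x < (h : ℝ) + 1 := by
    rw [hh]; exact Nat.lt_floor_add_one _
  have hxlt : x ≤ (2 : ℝ) ^ ((Q : ℝ) * (h + 1)) := by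
    rw [Real.rpow_mul (by norm_num), Real.rpow_natCast]
    exact ((Real.logb_lt_iff_lt_rpow hb hx0).1 hlt).le
  have he : 0 ≤ 1 - (p : ℝ) / Q := by
    rw [sub_nonneg, div_le_one hQ']; exact hpQ'
  have h1 : x ^ (1 - (p : ℝ) / Q) ≤ (2 : ℝ) ^ (((Q : ℝ) - p) * (h + 1)) := by
    refine (Real.rpow_le_rpow hx0.le hxlt he).trans_eq ?_
    rw [← Real.rpow_mul (by norm_num)]
    congr 1
    field_simp
  have hR : ((2 : ℝ) ^ Q) ^ h * ((2 : ℝ) ^ p) ^ (m - h)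
      = (2 : ℝ) ^ ((Q : ℝ) * h + p * (m - h)) := by
    rw [← pow_mul, ← pow_mul, ← pow_add, ← Real.rpow_natCast]
    congr 1
    push_cast [Nat.cast_sub hm]
    ring
  have hL : (2 : ℝ) ^ (p * m) = (2 : ℝ) ^ ((p : ℝ) * m) := by
    rw [← Real.rpow_natCast]; push_cast; rfl
  rw [hR, hL]
  calc _ ≤ (2 : ℝ) ^ (-(Q : ℝ)) * (2 : ℝ) ^ (((Q : ℝ) - p) * (h + 1)) *
        (2 : ℝ) ^ ((p : ℝ) * m) := by gcongr
    _ = (2 : ℝ) ^ (-(Q : ℝ) + ((Q : ℝ) - p) * (h + 1) + (p : ℝ) * m) := by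
        rw [Real.rpow_add (by norm_num), Real.rpow_add (by norm_num)]
    _ ≤ _ := by
        apply Real.rpow_le_rpow_of_exponent_le (by norm_num)
        have : (0 : ℝ) ≤ p := Nat.cast_nonneg p
        linarith
end

section
/- There is an absolute constant C > 0 with the following property. Let Q ≥ 2, let φ ∈ (ℤ[t])[x] be obtained from x by applying Q maps each equal to S or R, with p of them equal to S where 1 ≤ p ≤ Q−1, and define H_0(t) = 2 + t, H_{m+1} = φ(H_m). Let δ ∈ (0,1). Then for all sufficiently large m (depending on Q and δ), setting k = ⌊2^{δQm}⌋, one has log₂([t^k]H_m) ≥ 2^{−C·Q} · 2^{p·m} · k^{1−p/Q}. (Proposition 5.1, lower bound on the coefficients.) -/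
/-- One substitution step on `(ℤ[t])[x]`: `S(g) = g²` when the flag is `true`, and
`R(g) = t·g² + 2g` when it is `false` (here `t = C X` is a scalar of the coefficient
ring `ℤ[t]`). -/
noncomputable def stepSR (b : Bool) (g : Polynomial (Polynomial ℤ)) :
    Polynomial (Polynomial ℤ) :=
  if b then g ^ 2 else Polynomial.C Polynomial.X * g ^ 2 + 2 * g

/-- The composite `φ = T_{Q-1}(T_{Q-2}(⋯T_0(x)⋯)) ∈ (ℤ[t])[x]`, where `T_i = S` if
`Tseq i = true` and `T_i = R` otherwise; `compSR Tseq Q` is the result of applying the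
`Q` maps `T_0, …, T_{Q-1}` to `x`. -/
noncomputable def compSR (Tseq : ℕ → Bool) : ℕ → Polynomial (Polynomial ℤ)
  | 0 => Polynomial.X
  | n + 1 => stepSR (Tseq n) (compSR Tseq n)

open Polynomial in
/-- Coefficientwise domination `0 ≤ f ≤ g`. -/
def Dom (f g : ℤ[X]) : Prop := ∀ n, 0 ≤ f.coeff n ∧ f.coeff n ≤ g.coeff n

namespace Dom
open Polynomial

lemma mul {f g f' g' : ℤ[X]} (h : Dom f g) (h' : Dom f' g') : Dom (f * f') (g * g') := by
  intro n
  rw [coeff_mul, coeff_mul]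
  refine ⟨Finset.sum_nonneg fun x _ => mul_nonneg (h _).1 (h' _).1, Finset.sum_le_sum fun x _ => ?_⟩
  exact mul_le_mul (h _).2 (h' _).2 (h' _).1 ((h _).1.trans (h _).2)

lemma rfl_right {f g : ℤ[X]} (h : Dom f g) : Dom g g :=
  fun n => ⟨(h n).1.trans (h n).2, le_rfl⟩

lemma domX : Dom X X := by
  intro n
  rw [coeff_X]
  split_ifs <;> simp

lemma dom_add {f g g' : ℤ[X]} (h : Dom f g) (h' : Dom g' g') : Dom f (g' + g) := by
  intro n
  rw [coeff_add]
  have := h n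
  have := (h' n).1
  constructor <;> omega

lemma two {f g : ℤ[X]} (h : Dom f g) : Dom f (2 * g) := by
  rw [two_mul]
  exact dom_add h h.rfl_right

end Dom

open Polynomial in
/-- One step on `ℤ[t]`. -/
noncomputable def stZ (b : Bool) (g : ℤ[X]) : ℤ[X] :=
  if b then g ^ 2 else X * g ^ 2 + 2 * g

open Polynomial in
/-- Iterated steps on `ℤ[t]`. -/
noncomputable def itZ (T : ℕ → Bool) (g : ℤ[X]) : ℕ → ℤ[X]
  | 0 => g
  | n + 1 => stZ (T n) (itZ T g n)

open Polynomial in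
lemma eval_compSR (T : ℕ → Bool) (g : ℤ[X]) (n : ℕ) :
    Polynomial.eval g (compSR T n) = itZ T g n := by
  induction n with
  | zero => simp [compSR, itZ]
  | succ n ih =>
    simp only [compSR, itZ, stepSR, stZ]
    split_ifs <;> simp [ih]

/-- exponent of `t` in the leading term -/
def expA (T : ℕ → Bool) : ℕ → ℕ
  | 0 => 0
  | n + 1 => if T n then 2 * expA T n else 2 * expA T n + 1

lemma expA_lt (T : ℕ → Bool) (n : ℕ) : expA T n + 1 ≤ 2 ^ n := by
  induction n with
  | zero => simp [expA]
  | succ n ih =>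
    simp only [expA, pow_succ]
    split_ifs <;> omega

open Polynomial in
lemma dom_lead (T : ℕ → Bool) {f g : ℤ[X]} (h : Dom f g) (n : ℕ) :
    Dom (X ^ expA T n * f ^ 2 ^ n) (itZ T g n) := by
  induction n with
  | zero => simpa [expA, itZ] using h
  | succ n ih =>
    simp only [expA, itZ, stZ]
    have h2 := ih.mul ih
    split_ifs
    · convert h2 using 1 <;> ring
    · rw [add_comm (X * itZ T g n ^ 2)]
      refine Dom.dom_add ?_ ih.two.rfl_right
      convert Dom.domX.mul h2 using 1 <;> ring

open Polynomial in
lemma dom_low (T : ℕ → Bool) {f g : ℤ[X]} (h : Dom f g) (n : ℕ) :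
    Dom (f ^ 2 ^ ((Finset.range n).filter fun i => T i = true).card) (itZ T g n) := by
  induction n with
  | zero => simpa [itZ] using h
  | succ n ih =>
    simp only [itZ, stZ]
    rw [Finset.range_add_one, Finset.filter_insert]
    split_ifs with hT
    · rw [Finset.card_insert_of_notMem (by simp)]
      convert ih.mul ih using 1 <;> ring
    · refine Dom.dom_add ih.two ?_
      have := (Dom.domX.mul (ih.mul ih)).rfl_right
      convert this using 1 <;> ring

open Polynomial in
lemma coeff_two_add (N e : ℕ) (h : e ≤ N) : (2:ℤ) ^ (N - e) ≤ ((2 + X : ℤ[X]) ^ N).coeff e := by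
  have : (2 + X : ℤ[X]) = X + C 2 := by rw [add_comm]; rfl
  rw [this, coeff_X_add_C_pow]
  have : 1 ≤ N.choose e := Nat.choose_pos h
  have h2 : (1:ℤ) ≤ (N.choose e : ℤ) := by exact_mod_cast this
  have h3 : (0:ℤ) < 2 ^ (N - e) := by positivity
  nlinarith

open Polynomial in
lemma H_low (Q : ℕ) (T : ℕ → Bool) (p : ℕ)
    (hp : p = ((Finset.range Q).filter fun i => T i = true).card)
    (H : ℕ → ℤ[X]) (h0 : H 0 = 2 + X) (hs : ∀ m, H (m + 1) = itZ T (H m) Q) (m : ℕ) :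
    Dom ((2 + X) ^ 2 ^ (p * m)) (H m) := by
  induction m with
  | zero =>
    rw [h0]
    have : Dom (2 + X) (2 + X) := by
      have e : (2 : ℤ[X]) = C 2 := rfl
      intro n
      rw [e, coeff_add, coeff_X, coeff_C]
      split_ifs <;> simp
    simpa using this
  | succ m ih =>
    rw [hs]
    have := dom_low T ih Q
    rw [← hp] at this
    convert this using 1
    rw [← pow_mul]; congr 1; ring

open Polynomial in
lemma H_lead (Q : ℕ) (T : ℕ → Bool) (F : ℤ[X])
    (H : ℕ → ℤ[X]) (hs : ∀ m, H (m + 1) = itZ T (H m) Q) (m r : ℕ) (hF : Dom F (H m)) :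
    ∃ a, a + 1 ≤ 2 ^ (Q * r) ∧ Dom (X ^ a * F ^ 2 ^ (Q * r)) (H (m + r)) := by
  induction r with
  | zero => exact ⟨0, by simp, by simpa using hF⟩
  | succ r ih =>
    obtain ⟨a, ha, hD⟩ := ih
    refine ⟨expA T Q + a * 2 ^ Q, ?_, ?_⟩
    · have := expA_lt T Q
      have e : 2 ^ (Q * (r + 1)) = 2 ^ (Q * r) * 2 ^ Q := by ring
      rw [e]
      nlinarith
    · rw [← add_assoc, hs]
      convert dom_lead T hD Q using 1
      rw [mul_pow, ← pow_mul, ← pow_mul, ← mul_assoc, ← pow_add]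
      congr 2; ring

open Polynomial in
lemma key (Q : ℕ) (T : ℕ → Bool) (p : ℕ)
    (hp : p = ((Finset.range Q).filter fun i => T i = true).card) (hp1 : 1 ≤ p)
    (H : ℕ → ℤ[X]) (h0 : H 0 = 2 + X) (hs : ∀ m, H (m + 1) = itZ T (H m) Q)
    (m r k : ℕ) (hm : Q + 1 ≤ m) (hk1 : 2 ^ (Q * r) ≤ k) (hk2 : k < 2 ^ (Q * (r + 1))) :
    (2:ℤ) ^ 2 ^ (p * m + Q * r - 1) ≤ (H (m + r)).coeff k := by
  obtain ⟨a, ha, hD⟩ := H_lead Q T _ H hs m r (H_low Q T p hp H h0 hs m)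
  refine le_trans ?_ (hD k).2
  rw [coeff_X_pow_mul', if_pos (by omega), ← pow_mul, ← pow_add]
  have hpm : m ≤ p * m := Nat.le_mul_of_pos_left m hp1
  have h1 : 2 ^ (Q * (r + 1)) ≤ 2 ^ (p * m + Q * r - 1) :=
    Nat.pow_le_pow_right (by norm_num) (by rw [Nat.mul_add]; omega)
  have h2 : 2 ^ (p * m + Q * r) = 2 * 2 ^ (p * m + Q * r - 1) := by
    rw [← pow_succ']; congr 1; omega
  refine le_trans ?_ (coeff_two_add _ _ (by omega))
  exact pow_le_pow_right₀ (by norm_num) (by omega)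

/-- **Proposition 5.1** (lower bound on the coefficients). There is an absolute
constant `C > 0` such that: if `φ` is obtained from `x` by applying `Q ≥ 2` maps each
equal to `S` or `R`, `p` of them equal to `S` with `1 ≤ p ≤ Q - 1`, `H_0 = 2 + t`,
`H_{m+1} = φ(H_m)`, and `δ ∈ (0,1)`, then for all sufficiently large `m` (depending
on `Q` and `δ`), with `k = ⌊2^{δQm}⌋`,
`log₂([t^k] H_m) ≥ 2^{-C·Q} · 2^{p·m} · k^{1 - p/Q}`. -/
theorem coeff_lower_bound :
    ∃ C : ℝ, 0 < C ∧
      ∀ (Q : ℕ), 2 ≤ Q → ∀ (Tseq : ℕ → Bool) (p : ℕ),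
        p = ((Finset.range Q).filter fun i => Tseq i = true).card →
        1 ≤ p → p ≤ Q - 1 →
        ∀ (H : ℕ → Polynomial ℤ), H 0 = 2 + Polynomial.X →
          (∀ m, H (m + 1) = Polynomial.eval (H m) (compSR Tseq Q)) →
          ∀ δ : ℝ, δ ∈ Set.Ioo (0 : ℝ) 1 →
            ∃ M : ℕ, ∀ m, M ≤ m →
              (2 : ℝ) ^ (-(C * Q)) * (2 : ℝ) ^ (p * m) *
                  (⌊(2 : ℝ) ^ (δ * Q * m)⌋₊ : ℝ) ^ (1 - (p : ℝ) / Q) ≤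
                Real.logb 2 (((H m).coeff ⌊(2 : ℝ) ^ (δ * Q * m)⌋₊ : ℝ)) := by
  refine ⟨2, by norm_num, ?_⟩
  intro Q hQ T p hp hp1 hpQ H h0 hs δ hδ
  obtain ⟨hδ0, hδ1⟩ := hδ
  obtain ⟨M, hM⟩ := exists_nat_ge (((Q:ℝ) + 1) / (1 - δ))
  refine ⟨M, fun m hm => ?_⟩
  have hQ0 : (0:ℝ) < Q := by positivity
  have hm' : (Q:ℝ) + 1 ≤ (1 - δ) * m := by
    have : ((Q:ℝ) + 1) / (1 - δ) ≤ m := hM.trans (by exact_mod_cast hm)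
    rw [div_le_iff₀ (by linarith)] at this
    linarith
  have hfl : (⌊(2 : ℝ) ^ (δ * Q * m)⌋₊ : ℝ) ≤ (2 : ℝ) ^ (δ * Q * m) :=
    Nat.floor_le (by positivity)
  have hk1 : 1 ≤ ⌊(2 : ℝ) ^ (δ * Q * m)⌋₊ := by
    rw [Nat.one_le_floor_iff]
    exact Real.one_le_rpow (by norm_num) (by positivity)
  generalize ⌊(2 : ℝ) ^ (δ * Q * m)⌋₊ = k at hfl hk1 ⊢
  have hb : 1 < 2 ^ Q := Nat.one_lt_two_pow (by omega)
  have hr1 := Nat.pow_log_le_self (2 ^ Q) (x := k) (by omega)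
  have hr2 := Nat.lt_pow_succ_log_self hb k
  generalize Nat.log (2 ^ Q) k = r at hr1 hr2
  rw [← pow_mul] at hr1 hr2
  have hrm : (r:ℝ) ≤ δ * m := by
    have h1 : (2:ℝ) ^ ((Q * r : ℕ):ℝ) ≤ (2 : ℝ) ^ (δ * Q * m) := by
      rw [Real.rpow_natCast]
      exact le_trans (by exact_mod_cast hr1) hfl
    rw [Real.rpow_le_rpow_left_iff (by norm_num)] at h1
    push_cast at h1
    nlinarith
  have hmr : Q + 1 + r ≤ m := by
    have : (Q:ℝ) + 1 + r ≤ m := by linarith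
    exact_mod_cast this
  obtain ⟨m', rfl⟩ : ∃ m', m = m' + r := ⟨m - r, by omega⟩
  have hkey := key Q T p hp hp1 H h0 (fun m => by rw [hs, eval_compSR]) m' r k (by omega) hr1 hr2
  have hlog : (2:ℝ) ^ (p * m' + Q * r - 1) ≤ Real.logb 2 (((H (m' + r)).coeff k : ℝ)) := by
    have h1 : (2:ℝ) ^ 2 ^ (p * m' + Q * r - 1) ≤ ((H (m' + r)).coeff k : ℝ) := by
      exact_mod_cast hkey
    rw [Real.le_logb_iff_rpow_le (by norm_num) (lt_of_lt_of_le (by positivity) h1)]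
    refine le_trans (le_of_eq ?_) h1
    rw [← Real.rpow_natCast 2 (2 ^ _)]
    push_cast
    rfl
  refine le_trans ?_ hlog
  have hpQ' : (p:ℝ) ≤ Q := by exact_mod_cast (by omega : p ≤ Q)
  have hex : 0 ≤ 1 - (p:ℝ) / Q := by
    rw [sub_nonneg, div_le_one hQ0]; exact hpQ'
  have hkk : (k:ℝ) ^ (1 - (p : ℝ) / Q) ≤ (2:ℝ) ^ (((r:ℝ) + 1) * (Q - p)) := by
    have h1 : (k:ℝ) ≤ (2:ℝ) ^ ((Q:ℝ) * (r + 1)) := by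
      have : (k:ℝ) ≤ (2:ℝ) ^ ((Q * (r + 1) : ℕ) : ℝ) := by
        rw [Real.rpow_natCast]; exact_mod_cast hr2.le
      simpa using this
    refine (Real.rpow_le_rpow (by positivity) h1 hex).trans (le_of_eq ?_)
    rw [← Real.rpow_mul (by norm_num)]
    congr 1
    field_simp
  refine (mul_le_mul_of_nonneg_left hkk (by positivity)).trans ?_
  rw [← Real.rpow_natCast, ← Real.rpow_natCast, ← Real.rpow_add (by norm_num),
    ← Real.rpow_add (by norm_num)]
  refine Real.rpow_le_rpow_of_exponent_le (by norm_num) ?_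
  have : 1 ≤ p * m' + Q * r := by
    have : m' ≤ p * m' := Nat.le_mul_of_pos_left m' hp1
    omega
  rw [Nat.cast_sub this]
  push_cast
  have : (2:ℝ) ≤ Q := by exact_mod_cast hQ
  have : (0:ℝ) ≤ p := by positivity
  nlinarith
end

section
/- For every integer Q ≥ 1 and all n, writing n = Qm + r with m = ⌊n/Q⌋ and 0 ≤ r < Q, and setting A_{n,k} = max_{0 ≤ j ≤ k} a_{n,j}, one has for every k ≥ 0: a_{Qm,k} ≤ a_{Qm+r,k} ≤ ((k+2)·A_{Qm,k})^{2^r}. (Proposition 6.1, the transfer of coefficient bounds from dimension 2^{Qm} to dimension 2^n, with explicit constant (k+2).) -/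
/-- `A_{n,k} = max_{0 ≤ j ≤ k} a_{n,j}`, the maximum of the coefficients of `F_n` of
index at most `k`. -/
noncomputable def maxA (a : ℝ) (n k : ℕ) : ℤ :=
  (Finset.range (k + 1)).sup' (by simp) fun j => (F a n).coeff j

open Polynomial in
theorem sq_coeff_lower (p : ℤ[X]) (h0 : ∀ i, 0 ≤ p.coeff i) (k : ℕ) :
    0 ≤ (p ^ 2).coeff k ∧ p.coeff 0 * p.coeff k ≤ (p ^ 2).coeff k := by
  rw [sq, coeff_mul]
  refine ⟨Finset.sum_nonneg fun x _ => mul_nonneg (h0 _) (h0 _), ?_⟩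
  exact Finset.single_le_sum (f := fun x : ℕ × ℕ => p.coeff x.1 * p.coeff x.2)
    (fun x _ => mul_nonneg (h0 _) (h0 _)) (a := (0, k)) (by simp)

open Polynomial in
theorem sq_coeff_upper (p : ℤ[X]) (h0 : ∀ i, 0 ≤ p.coeff i) (c D : ℤ) (hc : 0 ≤ c) (k j : ℕ)
    (hj : j ≤ k) (h : ∀ i ≤ k, c * p.coeff i ≤ D) :
    c ^ 2 * (p ^ 2).coeff j ≤ (j + 1) * D ^ 2 := by
  rw [sq p, coeff_mul, Finset.mul_sum]
  have : ∀ x ∈ Finset.HasAntidiagonal.antidiagonal j, c ^ 2 * (p.coeff x.1 * p.coeff x.2) ≤ D ^ 2 := by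
    intro x hx
    have hx' := Finset.HasAntidiagonal.mem_antidiagonal.1 hx
    have h1 := h x.1 (by omega)
    have h2 := h x.2 (by omega)
    have e1 := mul_nonneg hc (h0 x.1)
    have e2 := mul_nonneg hc (h0 x.2)
    calc c ^ 2 * (p.coeff x.1 * p.coeff x.2) = (c * p.coeff x.1) * (c * p.coeff x.2) := by ring
      _ ≤ D * D := mul_le_mul h1 h2 e2 (e1.trans h1)
      _ = D ^ 2 := by ring
  have := Finset.sum_le_card_nsmul _ _ _ this
  simpa using this

theorem F_succ (a : ℝ) (n : ℕ) : F a (n + 1) = F a n ^ 2 ∨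
    F a (n + 1) = Polynomial.X * F a n ^ 2 + 2 * F a n := by
  rw [F]
  split_ifs <;> simp

open Polynomial in
theorem coeff_two_mul' (p : ℤ[X]) (k : ℕ) : (2 * p).coeff k = 2 * p.coeff k := by
  rw [two_mul, coeff_add, two_mul]

theorem F_basic (a : ℝ) (n : ℕ) : (∀ i, 0 ≤ (F a n).coeff i) ∧ 2 ≤ (F a n).coeff 0 := by
  induction n with
  | zero =>
    have h2 : (2 : Polynomial ℤ) = Polynomial.C 2 := rfl
    rw [F, h2]
    refine ⟨fun i => ?_, by simp⟩
    rw [Polynomial.coeff_add, Polynomial.coeff_X, Polynomial.coeff_C]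
    split_ifs <;> norm_num
  | succ n ih =>
    obtain ⟨h0, h2⟩ := ih
    rcases F_succ a n with h | h <;> rw [h]
    · refine ⟨fun i => (sq_coeff_lower _ h0 i).1, ?_⟩
      nlinarith [(sq_coeff_lower _ h0 0).2]
    · refine ⟨fun i => ?_, ?_⟩
      · rw [Polynomial.coeff_add, coeff_two_mul']
        have := h0 i
        cases i with
        | zero => simp only [Polynomial.coeff_X_mul_zero]; linarith
        | succ i =>
          rw [Polynomial.coeff_X_mul]
          linarith [(sq_coeff_lower _ h0 i).1]
      · rw [Polynomial.coeff_add, coeff_two_mul', Polynomial.coeff_X_mul_zero]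
        linarith

theorem F_mono (a : ℝ) (n k : ℕ) : (F a n).coeff k ≤ (F a (n + 1)).coeff k := by
  obtain ⟨h0, h2⟩ := F_basic a n
  have hk := h0 k
  rcases F_succ a n with h | h <;> rw [h]
  · nlinarith [(sq_coeff_lower _ h0 k).2]
  · rw [Polynomial.coeff_add, coeff_two_mul']
    cases k with
    | zero => simp only [Polynomial.coeff_X_mul_zero]; linarith
    | succ i =>
      rw [Polynomial.coeff_X_mul]
      linarith [(sq_coeff_lower _ h0 i).1]

theorem F_upper_step (a : ℝ) (n k : ℕ) (D : ℤ)
    (h : ∀ i ≤ k, ((k : ℤ) + 2) * (F a n).coeff i ≤ D) :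
    ∀ i ≤ k, ((k : ℤ) + 2) * (F a (n + 1)).coeff i ≤ D ^ 2 := by
  intro i hi
  obtain ⟨h0, h2⟩ := F_basic a n
  have hc : (0 : ℤ) < (k : ℤ) + 2 := by positivity
  have hD : (k : ℤ) + 2 ≤ D := by nlinarith [h 0 (by omega)]
  have hik : (i : ℤ) ≤ k := by exact_mod_cast hi
  have hi' := h i hi
  refine le_of_mul_le_mul_left ?_ hc
  rcases F_succ a n with e | e <;> rw [e]
  · have := sq_coeff_upper _ h0 _ D hc.le k i hi h
    nlinarith [sq_nonneg D]
  · rw [Polynomial.coeff_add, coeff_two_mul']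
    have hDD : ((k : ℤ) + 2) * D ≤ D ^ 2 := by nlinarith
    have hl : ((k : ℤ) + 2) * (((k : ℤ) + 2) * (F a n).coeff i) ≤ D ^ 2 :=
      (mul_le_mul_of_nonneg_left hi' hc.le).trans hDD
    cases i with
    | zero =>
      simp only [Polynomial.coeff_X_mul_zero]
      nlinarith [sq_nonneg D]
    | succ i =>
      rw [Polynomial.coeff_X_mul]
      have := sq_coeff_upper _ h0 _ D hc.le k i (by omega) h
      push_cast at hik
      nlinarith [sq_nonneg D]

theorem F_upper (a : ℝ) (N k r : ℕ) : ∀ i ≤ k,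
    ((k : ℤ) + 2) * (F a (N + r)).coeff i ≤ (((k : ℤ) + 2) * maxA a N k) ^ (2 ^ r) := by
  induction r with
  | zero =>
    intro i hi
    simp only [pow_zero, pow_one, add_zero]
    refine mul_le_mul_of_nonneg_left ?_ (by positivity)
    exact Finset.le_sup' (fun j => (F a N).coeff j) (Finset.mem_range.2 (by omega))
  | succ r ih =>
    rw [pow_succ 2 r, pow_mul]
    exact F_upper_step a (N + r) k _ ih

/-- **Proposition 6.1** (transfer from dimension `2^{Qm}` to dimension `2^n`, with
explicit constant `k+2`). Writing `n = Qm + r` with `m = ⌊n/Q⌋` and `0 ≤ r < Q`,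
for every `k ≥ 0`: `a_{Qm,k} ≤ a_{Qm+r,k} ≤ ((k+2)·A_{Qm,k})^(2^r)`. -/
theorem coeff_transfer (a : ℝ) (ha : a ∈ Set.Ioo (0 : ℝ) 1) (Q : ℕ) (hQ : 1 ≤ Q)
    (n k : ℕ) (m r : ℕ) (hm : m = n / Q) (hr : r = n % Q) :
    (F a (Q * m)).coeff k ≤ (F a (Q * m + r)).coeff k ∧
    (F a (Q * m + r)).coeff k ≤ (((k : ℤ) + 2) * maxA a (Q * m) k) ^ (2 ^ r) := by
  constructor
  · exact monotone_nat_of_le_succ (f := fun n => (F a n).coeff k) (fun n => F_mono a n k)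
      (Nat.le_add_right _ _)
  · have h1 := F_upper a (Q * m) k r k le_rfl
    have h2 := (F_basic a (Q * m + r)).1 k
    have h3 : (0 : ℤ) ≤ k := by positivity
    nlinarith
end

section
/- Let a ∈ (0,1) be rational and δ ∈ (0,1). Then there exists a constant C > 0 depending only on a and δ, and for every integer n ≥ 2 a polytope P_n ⊂ ℝ^n, such that log₂|ℱ(P_n)| ≤ C·n^{1−a}, log₂|V(P_n)| ≤ C·n^{a+δ(1−a)}, and (R(P_n)/r(P_n))² ≤ C·n^{1−δ+a}; consequently log₂|V(P_n)| · log₂|ℱ(P_n)| · (R(P_n)/r(P_n))² ≤ C³·n^{2+a(1−δ)}. (Theorem 1.3, part 1.) -/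
structure GoodPair {ι : Type} [Fintype ι] (S T : Finset (ι → ℝ)) (A B : ℝ) : Prop where
  le_one : ∀ s ∈ S, ∀ f ∈ T, ∑ i, |f i| * |s i| ≤ 1
  cert : ∀ l : ι → ℝ, ∃ s ∈ S, 0 ≤ ∑ i, l i * s i ∧
    ∃ t ∈ convexHull ℝ (T : Set (ι → ℝ)), l = (∑ i, l i * s i) • t
  zero_mem : (0 : ι → ℝ) ∈ convexHull ℝ (T : Set (ι → ℝ))
  normS : ∀ s ∈ S, ∑ i, s i ^ 2 ≤ A
  normT : ∀ f ∈ T, ∑ i, f i ^ 2 ≤ B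

theorem comb_lemma {E κ : Type} [AddCommGroup E] [Module ℝ E] [Fintype κ] (K : Set E)
    (hK : Convex ℝ K) (h0 : K.Nonempty) (c : κ → ℝ) (hc : ∀ k, 0 ≤ c k) (t : κ → E)
    (ht : ∀ k, t k ∈ K) : ∃ u ∈ K, ∑ k, c k • t k = (∑ k, c k) • u := by
  rcases (Finset.sum_nonneg (fun k _ => hc k) : 0 ≤ ∑ k, c k).eq_or_lt with h | h
  · obtain ⟨u, hu⟩ := h0
    refine ⟨u, hu, ?_⟩
    have h1 := (Finset.sum_eq_zero_iff_of_nonneg (fun k _ => hc k)).1 h.symm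
    rw [← h, zero_smul]
    exact Finset.sum_eq_zero fun k hk => by rw [h1 k hk, zero_smul]
  · refine ⟨∑ k, (c k / ∑ k, c k) • t k, hK.sum_mem (fun k _ => by have := hc k; positivity) ?_
      (fun k _ => ht k), ?_⟩
    · rw [← Finset.sum_div, div_self h.ne']
    · rw [Finset.smul_sum]
      refine Finset.sum_congr rfl fun k _ => ?_
      rw [smul_smul]; congr 1; field_simp

/-- uncurrying as a linear map -/
def uncL (κ ι : Type) : (κ → ι → ℝ) →ₗ[ℝ] (κ × ι → ℝ) where
  toFun g p := g p.1 p.2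
  map_add' _ _ := rfl
  map_smul' _ _ := rfl

/-- embedding as the block `k` -/
def embL {κ : Type} (ι : Type) [DecidableEq κ] (k : κ) : (ι → ℝ) →ₗ[ℝ] (κ × ι → ℝ) where
  toFun g p := if p.1 = k then g p.2 else 0
  map_add' _ _ := by ext p; by_cases h : p.1 = k <;> simp [h]
  map_smul' _ _ := by ext p; by_cases h : p.1 = k <;> simp [h]

open Classical in
noncomputable def prodF (κ : Type) {ι : Type} [Fintype κ] (S : Finset (ι → ℝ)) : Finset (κ × ι → ℝ) :=
  (Fintype.piFinset (fun _ : κ => S)).image (uncL κ ι)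

open Classical in
noncomputable def sumF (κ : Type) {ι : Type} [Fintype κ] (S : Finset (ι → ℝ)) : Finset (κ × ι → ℝ) :=
  ((Finset.univ : Finset κ) ×ˢ S).image (fun q => embL ι q.1 q.2)

theorem mem_prodF (κ : Type) {ι : Type} [Fintype κ] (S : Finset (ι → ℝ)) (g : κ → ι → ℝ)
    (hg : ∀ k, g k ∈ S) : uncL κ ι g ∈ prodF κ S := by
  simp only [prodF, Finset.mem_image, Fintype.mem_piFinset]
  exact ⟨g, hg, rfl⟩

theorem mem_sumF (κ : Type) {ι : Type} [Fintype κ] [DecidableEq κ] (S : Finset (ι → ℝ)) (k : κ)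
    (g : ι → ℝ) (hg : g ∈ S) : embL ι k g ∈ sumF κ S := by
  simp only [sumF, Finset.mem_image, Finset.mem_product]
  refine ⟨(k, g), ⟨Finset.mem_univ _, hg⟩, ?_⟩
  ext p
  simp [embL]

theorem card_prodF (κ : Type) {ι : Type} [Fintype κ] (S : Finset (ι → ℝ)) :
    (prodF κ S).card ≤ S.card ^ Fintype.card κ := by
  classical
  refine Finset.card_image_le.trans ?_
  simp

theorem card_sumF (κ : Type) {ι : Type} [Fintype κ] (S : Finset (ι → ℝ)) :
    (sumF κ S).card ≤ Fintype.card κ * S.card := by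
  classical
  refine Finset.card_image_le.trans ?_
  simp

theorem conv_prodF (κ : Type) {ι : Type} [Fintype κ] (S : Finset (ι → ℝ)) (g : κ → ι → ℝ)
    (hg : ∀ k, g k ∈ convexHull ℝ (S : Set (ι → ℝ))) :
    uncL κ ι g ∈ convexHull ℝ (prodF κ S : Set (κ × ι → ℝ)) := by
  classical
  have h : (prodF κ S : Set (κ × ι → ℝ)) = uncL κ ι '' (Set.pi Set.univ (fun _ => (S : Set (ι → ℝ)))) := by
    ext x
    simp [prodF]
  rw [h, ← LinearMap.image_convexHull, convexHull_pi]
  exact ⟨g, fun k _ => hg k, rfl⟩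

open Classical in
theorem conv_sumF (κ : Type) {ι : Type} [Fintype κ] (S : Finset (ι → ℝ)) (k : κ) (g : ι → ℝ)
    (hg : g ∈ convexHull ℝ (S : Set (ι → ℝ))) :
    embL ι k g ∈ convexHull ℝ (sumF κ S : Set (κ × ι → ℝ)) := by
  have h : embL ι k '' (S : Set (ι → ℝ)) ⊆ (sumF κ S : Set (κ × ι → ℝ)) := by
    rintro _ ⟨x, hx, rfl⟩
    simp only [sumF, Finset.coe_image]
    exact ⟨(k, x), by simpa using hx, rfl⟩
  refine convexHull_mono h ?_
  rw [← LinearMap.image_convexHull]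
  exact ⟨g, hg, rfl⟩

theorem GoodPair.linf (κ : Type) {ι : Type} [Fintype κ] [Nonempty κ] [Fintype ι]
    {S T : Finset (ι → ℝ)} {A B : ℝ} (h : GoodPair S T A B) :
    GoodPair (prodF κ S) (sumF κ T) (Fintype.card κ * A) B := by
  classical
  refine ⟨?_, ?_, ?_, ?_, ?_⟩
  · intro s hs f hf
    simp only [prodF, sumF, Finset.mem_image, Fintype.mem_piFinset, Finset.mem_product] at hs hf
    obtain ⟨s, hs, rfl⟩ := hs
    obtain ⟨⟨k, f⟩, ⟨-, hf⟩, rfl⟩ := hf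
    rw [Fintype.sum_prod_type, Finset.sum_eq_single k]
    · simpa [uncL, embL] using h.le_one _ (hs k) f hf
    · intro b _ hb; simp [embL, hb]
    · simp
  · intro l
    choose s hs hs0 t ht hl using fun k => h.cert (fun i => l (k, i))
    have hsum : ∑ p, l p * uncL κ ι s p = ∑ k, ∑ i, l (k, i) * s k i := by
      rw [Fintype.sum_prod_type]; rfl
    refine ⟨uncL κ ι s, mem_prodF κ S s hs, ?_, ?_⟩
    · rw [hsum]; exact Finset.sum_nonneg fun k _ => hs0 k
    · rw [hsum]
      obtain ⟨u, hu, hu2⟩ := comb_lemma (convexHull ℝ (sumF κ T : Set (κ × ι → ℝ)))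
        (convex_convexHull _ _)
        ⟨_, conv_sumF κ T (Classical.arbitrary κ) 0 h.zero_mem⟩ _ hs0
        (fun k => embL ι k (t k)) (fun k => conv_sumF κ T k _ (ht k))
      refine ⟨u, hu, ?_⟩
      rw [← hu2]
      ext ⟨k, i⟩
      simp only [Finset.sum_apply, Pi.smul_apply]
      rw [Finset.sum_eq_single k]
      · simpa [embL] using congrFun (hl k) i
      · intro b _ hb; simp [embL, hb.symm]
      · simp
  · simpa using conv_sumF κ T (Classical.arbitrary κ) 0 h.zero_mem
  · intro s hs
    simp only [prodF, Finset.mem_image, Fintype.mem_piFinset] at hs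
    obtain ⟨s, hs, rfl⟩ := hs
    rw [Fintype.sum_prod_type]
    refine (Finset.sum_le_sum fun k _ => h.normS _ (hs k)).trans ?_
    simp
  · intro f hf
    simp only [sumF, Finset.mem_image, Finset.mem_product] at hf
    obtain ⟨⟨k, f⟩, ⟨-, hf⟩, rfl⟩ := hf
    rw [Fintype.sum_prod_type, Finset.sum_eq_single k]
    · simpa [embL] using h.normT f hf
    · intro b _ hb; simp [embL, hb]
    · simp

theorem GoodPair.lone (κ : Type) {ι : Type} [Fintype κ] [Nonempty κ] [Fintype ι]
    {S T : Finset (ι → ℝ)} {A B : ℝ} (h : GoodPair S T A B) :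
    GoodPair (sumF κ S) (prodF κ T) A (Fintype.card κ * B) := by
  classical
  refine ⟨?_, ?_, ?_, ?_, ?_⟩
  · intro s hs f hf
    simp only [prodF, sumF, Finset.mem_image, Fintype.mem_piFinset, Finset.mem_product] at hs hf
    obtain ⟨f, hf, rfl⟩ := hf
    obtain ⟨⟨k, s⟩, ⟨-, hs⟩, rfl⟩ := hs
    rw [Fintype.sum_prod_type, Finset.sum_eq_single k]
    · simpa [uncL, embL] using h.le_one s hs _ (hf k)
    · intro b _ hb; simp [embL, hb]
    · simp
  · intro l
    choose s hs hs0 t ht hl using fun k => h.cert (fun i => l (k, i))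
    obtain ⟨k0, hk0⟩ := Finite.exists_max (fun k => ∑ i, l (k, i) * s k i)
    have hsum : ∑ p, l p * embL ι k0 (s k0) p = ∑ i, l (k0, i) * s k0 i := by
      rw [Fintype.sum_prod_type, Finset.sum_eq_single k0]
      · simp [embL]
      · intro b _ hb; simp [embL, hb]
      · simp
    refine ⟨embL ι k0 (s k0), ?_, ?_, ?_⟩
    · exact mem_sumF κ S k0 (s k0) (hs k0)
    · rw [hsum]; exact hs0 k0
    · rw [hsum]
      have key : ∀ k, ∃ u ∈ convexHull ℝ (T : Set (ι → ℝ)),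
          (fun i => l (k, i)) = (∑ i, l (k0, i) * s k0 i) • u := by
        intro k
        rcases (hs0 k0).eq_or_lt with h0 | h0
        · refine ⟨0, h.zero_mem, ?_⟩
          have : ∑ i, l (k, i) * s k i = 0 := le_antisymm ((hk0 k).trans h0.ge) (hs0 k)
          rw [hl k, this]; simp
        · refine ⟨((∑ i, l (k, i) * s k i) / (∑ i, l (k0, i) * s k0 i)) • t k, ?_, ?_⟩
          · exact (convex_convexHull ℝ _).smul_mem_of_zero_mem h.zero_mem (ht k)
              ⟨div_nonneg (hs0 k) h0.le, (div_le_one h0).2 (hk0 k)⟩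
          · rw [smul_smul, mul_div_cancel₀ _ h0.ne']
            exact hl k
      choose u hu hu2 using key
      refine ⟨uncL κ ι u, conv_prodF κ T u hu, ?_⟩
      ext ⟨k, i⟩
      exact congrFun (hu2 k) i
  · simpa using conv_prodF κ T 0 (fun _ => h.zero_mem)
  · intro f hf
    simp only [sumF, Finset.mem_image, Finset.mem_product] at hf
    obtain ⟨⟨k, f⟩, ⟨-, hf⟩, rfl⟩ := hf
    rw [Fintype.sum_prod_type, Finset.sum_eq_single k]
    · simpa [embL] using h.normS f hf
    · intro b _ hb; simp [embL, hb]
    · simp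
  · intro s hs
    simp only [prodF, Finset.mem_image, Fintype.mem_piFinset] at hs
    obtain ⟨s, hs, rfl⟩ := hs
    rw [Fintype.sum_prod_type]
    refine (Finset.sum_le_sum fun k _ => h.normT _ (hs k)).trans ?_
    simp

open Classical in
theorem GoodPair.restrict {ι κ : Type} [Fintype ι] [Fintype κ] (e : κ → ι)
    (he : Function.Injective e) {S T : Finset (ι → ℝ)} {A B : ℝ} (h : GoodPair S T A B) :
    GoodPair (S.image (LinearMap.funLeft ℝ ℝ e)) (T.image (LinearMap.funLeft ℝ ℝ e)) A B := by
  have sub : ∀ g : ι → ℝ, (∀ i, 0 ≤ g i) → ∑ j, g (e j) ≤ ∑ i, g i := by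
    intro g hg
    rw [← Finset.sum_image (s := Finset.univ) (g := e) (f := g) (fun _ _ _ _ hh => he hh)]
    exact Finset.sum_le_sum_of_subset_of_nonneg (Finset.subset_univ _) (fun i _ _ => hg i)
  refine ⟨?_, ?_, ?_, ?_, ?_⟩
  · intro s hs f hf
    obtain ⟨s, hs', rfl⟩ := Finset.mem_image.1 hs
    obtain ⟨f, hf', rfl⟩ := Finset.mem_image.1 hf
    exact (sub (fun i => |f i| * |s i|) (fun i => by positivity)).trans (h.le_one s hs' f hf')
  · intro l
    obtain ⟨s, hs, hs0, t, ht, hl⟩ := h.cert (Function.extend e l 0)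
    have hsum : ∑ j, l j * LinearMap.funLeft ℝ ℝ e s j = ∑ i, Function.extend e l 0 i * s i := by
      refine Fintype.sum_of_injective e he _ _ ?_ ?_
      · intro i hi
        rw [Function.extend_apply' _ _ _ (by simpa using hi)]; simp
      · intro j
        rw [he.extend_apply]; rfl
    refine ⟨_, Finset.mem_image_of_mem _ hs, by rw [hsum]; exact hs0,
      LinearMap.funLeft ℝ ℝ e t, ?_, ?_⟩
    · rw [Finset.coe_image, ← LinearMap.image_convexHull]
      exact ⟨t, ht, rfl⟩
    · rw [hsum, ← map_smul, ← hl]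
      ext j
      simp [LinearMap.funLeft_apply, he.extend_apply]
  · rw [Finset.coe_image, ← LinearMap.image_convexHull]
    exact ⟨0, h.zero_mem, by simp⟩
  · intro s hs
    obtain ⟨s, hs', rfl⟩ := Finset.mem_image.1 hs
    exact (sub (fun i => s i ^ 2) (fun i => by positivity)).trans (h.normS s hs')
  · intro s hs
    obtain ⟨s, hs', rfl⟩ := Finset.mem_image.1 hs
    exact (sub (fun i => s i ^ 2) (fun i => by positivity)).trans (h.normT s hs')

/-- the base weights -/
noncomputable def wt (m : ℕ) : ℝ := √((m : ℝ) + 1) - √(m : ℝ)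

theorem wt_eq (m : ℕ) : wt m = 1 / (√((m : ℝ) + 1) + √(m : ℝ)) := by
  have h1 : 0 < √((m : ℝ) + 1) := by positivity
  have h2 : 0 ≤ √(m : ℝ) := by positivity
  rw [eq_div_iff (by positivity), wt]
  have e1 : √((m : ℝ) + 1) ^ 2 = m + 1 := Real.sq_sqrt (by positivity)
  have e2 : √(m : ℝ) ^ 2 = m := Real.sq_sqrt (by positivity)
  nlinarith

theorem wt_nonneg (m : ℕ) : 0 ≤ wt m := by rw [wt_eq]; positivity

theorem wt_anti {m k : ℕ} (h : m ≤ k) : wt k ≤ wt m := by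
  have h' : (m : ℝ) ≤ k := by exact_mod_cast h
  rw [wt_eq, wt_eq]
  gcongr

theorem wt_sq (m : ℕ) : wt m ^ 2 ≤ ((m : ℝ) + 1)⁻¹ := by
  rw [wt_eq, div_pow, one_pow, ← one_div]
  have e1 : √((m : ℝ) + 1) ^ 2 = m + 1 := Real.sq_sqrt (by positivity)
  have h1 : 0 < √((m : ℝ) + 1) := by positivity
  have h2 : 0 ≤ √(m : ℝ) := by positivity
  apply one_div_le_one_div_of_le (by positivity)
  nlinarith

theorem wt_sum (U : Finset ℕ) : ∑ i ∈ U, wt i ≤ √(U.card : ℝ) := by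
  induction U using Finset.induction_on_max with
  | empty => simp
  | insert a s hs ih =>
    have ha : a ∉ s := fun h => lt_irrefl _ (hs a h)
    have hc : s.card ≤ a := by
      have : s ⊆ Finset.range a := fun x hx => Finset.mem_range.2 (hs x hx)
      simpa using Finset.card_le_card this
    rw [Finset.sum_insert ha, Finset.card_insert_of_notMem ha]
    have := wt_anti hc
    have h2 : wt s.card = √((s.card : ℝ) + 1) - √(s.card : ℝ) := rfl
    push_cast
    linarith

theorem wt_abel (b : ℕ → ℝ) (m : ℕ) : ∑ i ∈ Finset.range m, b i * wt i =
    ∑ i ∈ Finset.range m, (b i - b (i + 1)) * √((i : ℝ) + 1) + b m * √(m : ℝ) := by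
  induction m with
  | zero => simp
  | succ m ih =>
    rw [Finset.sum_range_succ, Finset.sum_range_succ, ih, wt]
    push_cast
    ring

theorem tele (b : ℕ → ℝ) (s j : ℕ) (hj : j ≤ s) :
    ∑ i ∈ Finset.range s, (if j ≤ i then b i - b (i + 1) else 0) = b j - b s := by
  induction s, hj using Nat.le_induction with
  | base =>
    rw [sub_self]
    exact Finset.sum_eq_zero fun i hi => if_neg (by simpa using hi)
  | succ m hm ih => rw [Finset.sum_range_succ, ih, if_pos hm]; ring

/-- base vertex set -/
noncomputable def baseV {s : ℕ} (q : Equiv.Perm (Fin s) × (Fin s → SignType)) : Fin s → ℝ :=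
  fun i => (q.2 i : ℝ) * wt (q.1 i)

noncomputable def baseS (s : ℕ) : Finset (Fin s → ℝ) := Finset.univ.image baseV

noncomputable def baseF {s : ℕ} (e : Fin s → SignType) : Fin s → ℝ :=
  fun i => (e i : ℝ) / √(((Finset.univ.filter (fun i => e i ≠ 0)).card : ℝ))

noncomputable def baseT (s : ℕ) : Finset (Fin s → ℝ) := Finset.univ.image baseF

theorem card_baseS (s : ℕ) : (baseS s).card ≤ s.factorial * 3 ^ s := by
  refine Finset.card_image_le.trans ?_
  have : Fintype.card SignType = 3 := rfl
  simp [Fintype.card_perm, this]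

theorem card_baseT (s : ℕ) : (baseT s).card ≤ 3 ^ s := by
  refine Finset.card_image_le.trans ?_
  have : Fintype.card SignType = 3 := rfl
  simp [this]

theorem abs_sgn (x : SignType) : |(x : ℝ)| = if x ≠ 0 then 1 else 0 := by
  cases x <;> simp

theorem abs_sgn_le (x : SignType) : |(x : ℝ)| ≤ 1 := by
  cases x <;> simp

theorem base_good (s : ℕ) : GoodPair (baseS s) (baseT s) (1 + Real.log s) 1 := by
  refine ⟨?_, ?_, ?_, ?_, ?_⟩
  · intro v hv f hf
    simp only [baseS, baseT, Finset.mem_image, Finset.mem_univ, true_and] at hv hf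
    obtain ⟨⟨σ, e⟩, rfl⟩ := hv
    obtain ⟨d, rfl⟩ := hf
    set U := Finset.univ.filter (fun i => d i ≠ 0) with hU
    have h1 : ∀ i, |baseF d i| * |baseV (σ, e) i| ≤
        (if d i ≠ 0 then wt (σ i) else 0) / √(U.card : ℝ) := by
      intro i
      simp only [baseF, baseV, abs_div, abs_mul, abs_sgn (d i), ← hU,
        abs_of_nonneg (Real.sqrt_nonneg _), abs_of_nonneg (wt_nonneg _)]
      have := abs_sgn_le (e i)
      have h3 := wt_nonneg (σ i)
      split_ifs
      · rw [div_mul_eq_mul_div]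
        gcongr
        nlinarith
      · simp
    refine (Finset.sum_le_sum fun i _ => h1 i).trans ?_
    rw [← Finset.sum_div, ← Finset.sum_filter, ← hU]
    refine div_le_one_of_le₀ ?_ (Real.sqrt_nonneg _)
    have h2 := wt_sum (U.image (fun i => (σ i : ℕ)))
    have hinj : Function.Injective (fun i => (σ i : ℕ)) := fun a b h =>
      σ.injective (Fin.ext h)
    rwa [Finset.sum_image (fun a _ b _ h => hinj h), Finset.card_image_of_injective _ hinj] at h2
  · intro l
    set σ : Equiv.Perm (Fin s) := Tuple.sort (fun i => -|l i|) with hσ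
    have hmono : Monotone ((fun i => -|l i|) ∘ σ) := Tuple.monotone_sort _
    let b : ℕ → ℝ := fun m => if h : m < s then |l (σ ⟨m, h⟩)| else 0
    have hb : ∀ m, 0 ≤ b m - b (m + 1) := by
      intro m
      simp only [b]
      by_cases h : m + 1 < s
      · have h' : m < s := by omega
        have := hmono (show (⟨m, h'⟩ : Fin s) ≤ ⟨m + 1, h⟩ by simp)
        simp only [Function.comp] at this
        rw [dif_pos h, dif_pos h']; linarith
      · rw [dif_neg h]
        split_ifs <;> simp
    have hbs : b s = 0 := by simp [b]
    have hbi : ∀ i : Fin s, b (σ.symm i) = |l i| := by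
      intro i; simp [b]
    let sg : Fin s → SignType := fun i => if 0 ≤ l i then 1 else -1
    have hsg : ∀ i, sg i ≠ 0 := by
      intro i; simp only [sg]; split_ifs <;> decide
    have hsgl : ∀ i, (sg i : ℝ) * |l i| = l i := by
      intro i; simp only [sg]; split_ifs with h
      · simp [abs_of_nonneg h]
      · simp [abs_of_neg (not_le.1 h)]
    have hsgl2 : ∀ i, (sg i : ℝ) * l i = |l i| := by
      intro i; simp only [sg]; split_ifs with h
      · simp [abs_of_nonneg h]
      · simp [abs_of_neg (not_le.1 h)]
    let c : Fin s → ℝ := fun k => (b k - b (k + 1)) * √((k : ℝ) + 1)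
    have hc : ∀ k, 0 ≤ c k := fun k => mul_nonneg (hb k) (Real.sqrt_nonneg _)
    have hsum : ∑ i, l i * baseV (σ.symm, sg) i = ∑ k, c k := by
      have h1 : ∀ i, l i * baseV (σ.symm, sg) i = b (σ.symm i) * wt (σ.symm i) := by
        intro i
        rw [hbi, ← hsgl2, baseV]; ring
      simp only [h1]
      rw [Equiv.sum_comp σ.symm (fun i : Fin s => b i * wt i)]
      rw [Fin.sum_univ_eq_sum_range (fun i => b i * wt i), wt_abel, hbs]
      rw [← Fin.sum_univ_eq_sum_range (fun i => (b i - b (i + 1)) * √((i : ℝ) + 1))]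
      simp [c]
    let ek : Fin s → Fin s → SignType := fun k i => if σ.symm i ≤ k then sg i else 0
    have hcard : ∀ k : Fin s, (Finset.univ.filter (fun i => ek k i ≠ 0)).card = (k : ℕ) + 1 := by
      intro k
      have : Finset.univ.filter (fun i => ek k i ≠ 0) = (Finset.Iic k).map σ.toEmbedding := by
        ext i
        simp [ek, hsg, Finset.mem_map_equiv]
      rw [this, Finset.card_map, Fin.card_Iic]
    obtain ⟨t, ht, ht2⟩ := comb_lemma (convexHull ℝ (baseT s : Set (Fin s → ℝ)))
      (convex_convexHull _ _)
      ⟨_, subset_convexHull _ _ (Finset.mem_coe.2 (Finset.mem_image_of_mem _ (Finset.mem_univ 0)))⟩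
      c hc (fun k => baseF (ek k))
      (fun k => subset_convexHull _ _ (Finset.mem_coe.2 (Finset.mem_image_of_mem _ (Finset.mem_univ _))))
    refine ⟨baseV (σ.symm, sg), Finset.mem_image_of_mem _ (Finset.mem_univ _), ?_, t, ht, ?_⟩
    · rw [hsum]; exact Finset.sum_nonneg fun k _ => hc k
    · rw [hsum, ← ht2]
      ext i
      have h1 : ∀ k : Fin s, (c k • baseF (ek k)) i =
          (sg i : ℝ) * (if ((σ.symm i : Fin s) : ℕ) ≤ (k : ℕ) then b k - b (k + 1) else 0) := by
        intro k
        have h3 : 0 < √((k : ℝ) + 1) := by positivity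
        have h4 : baseF (ek k) i = (ek k i : ℝ) / √((k : ℝ) + 1) := by
          rw [baseF, hcard]; push_cast; rfl
        rw [Pi.smul_apply, smul_eq_mul, h4]
        simp only [c, ek, Fin.le_def]
        split_ifs
        · field_simp
        · simp
      rw [Finset.sum_apply]
      simp only [h1]
      rw [← Finset.mul_sum, Fin.sum_univ_eq_sum_range
        (fun k => if ((σ.symm i : Fin s) : ℕ) ≤ k then b k - b (k + 1) else 0),
        tele _ _ _ (σ.symm i).isLt.le, hbs, sub_zero, hbi, hsgl]
  · refine subset_convexHull _ _ (Finset.mem_coe.2 (Finset.mem_image.2 ⟨0, Finset.mem_univ _, ?_⟩))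
    ext i; simp [baseF]
  · intro v hv
    obtain ⟨⟨σ, e⟩, -, rfl⟩ := Finset.mem_image.1 hv
    have h1 : ∀ i, baseV (σ, e) i ^ 2 ≤ ((σ i : ℝ) + 1)⁻¹ := by
      intro i
      simp only [baseV, mul_pow]
      have := (sq_le_one_iff_abs_le_one _).2 (abs_sgn_le (e i))
      have h2 := wt_sq (σ i)
      have h3 := sq_nonneg (wt (σ i))
      nlinarith
    refine (Finset.sum_le_sum fun i _ => h1 i).trans ?_
    rw [Equiv.sum_comp σ (fun i : Fin s => ((i : ℝ) + 1)⁻¹),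
      Fin.sum_univ_eq_sum_range (fun i => ((i : ℝ) + 1)⁻¹)]
    have := harmonic_le_one_add_log s
    simpa [harmonic] using this
  · intro f hf
    obtain ⟨d, -, rfl⟩ := Finset.mem_image.1 hf
    set U := Finset.univ.filter (fun i => d i ≠ 0) with hU
    have h1 : ∀ i, baseF d i ^ 2 = (if d i ≠ 0 then 1 else 0) / (U.card : ℝ) := by
      intro i
      rw [← sq_abs, baseF, abs_div, abs_sgn, ← hU, div_pow, sq_abs, Real.sq_sqrt (by positivity)]
      split_ifs <;> simp
    simp only [h1]
    rw [← Finset.sum_div, ← Finset.sum_filter, ← hU]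
    simp only [Finset.sum_const, nsmul_eq_mul, mul_one]
    exact div_self_le_one _

section facets
variable {E : Type} [NormedAddCommGroup E] [InnerProductSpace ℝ E]

theorem facet_aux [FiniteDimensional ℝ E] (T : Finset E) (P G : Set E)
    (hP : P = {y | ∀ f ∈ T, inner ℝ f y ≤ 1}) (h0 : (0 : E) ∈ interior P)
    (hn : 2 ≤ Module.finrank ℝ E)
    (hG : IsExposed ℝ P G)
    (hd : Module.finrank ℝ (affineSpan ℝ G).direction = Module.finrank ℝ E - 1) :
    ∃ f ∈ T, G = {y | y ∈ P ∧ inner ℝ f y = 1} := by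
  have hne : G.Nonempty := by
    by_contra h
    rw [Set.not_nonempty_iff_eq_empty] at h
    subst h
    rw [AffineSubspace.span_empty, AffineSubspace.direction_bot, finrank_bot] at hd
    omega
  obtain ⟨l, hl⟩ := hG hne
  obtain ⟨x0, hx0⟩ := hne
  have hPconv : Convex ℝ P := by
    rw [hP]
    intro x hx y hy a b ha hb hab f hf
    have h1 := hx f hf
    have h2 := hy f hf
    rw [inner_add_right, inner_smul_right, inner_smul_right]
    calc a * inner ℝ f x + b * inner ℝ f y ≤ a * 1 + b * 1 := by gcongr
      _ = 1 := by linarith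
  have hGconv : Convex ℝ G := hG.convex hPconv
  have hGP : G ⊆ P := hG.subset
  -- `l` is not zero
  have hl0 : l ≠ 0 := by
    rintro rfl
    have : G = P := by rw [hl]; ext x; simp
    rw [this] at hd
    have h2 : affineSpan ℝ P = ⊤ := by
      refine affineSpan_eq_top_of_nonempty_interior ⟨0, interior_mono (subset_convexHull ℝ P) h0⟩
    rw [h2, AffineSubspace.direction_top, finrank_top] at hd
    omega
  -- some constraint is tight on all of `G`
  have htight : ∃ f ∈ T, ∀ x ∈ G, inner ℝ f x = 1 := by
    by_contra hcon
    push Not at hcon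
    have hlt : ∀ f : T, ∃ x ∈ G, inner ℝ (f : E) x < 1 := by
      rintro ⟨f, hf⟩
      obtain ⟨x, hx, hx1⟩ := hcon f hf
      have := hGP hx
      rw [hP] at this
      exact ⟨x, hx, lt_of_le_of_ne (this f hf) hx1⟩
    choose x hx hx1 using hlt
    have hz : ∃ z ∈ G, ∀ f ∈ T, inner ℝ f z < 1 := by
      rcases T.eq_empty_or_nonempty with hT | hT
      · exact ⟨x0, hx0, by simp [hT]⟩
      · have hTc : 0 < (Fintype.card T : ℝ) := by
          simpa using hT
        refine ⟨∑ f : T, (1 / (Fintype.card T : ℝ)) • x f, hGconv.sum_mem (fun _ _ => by positivity) ?_ (fun f _ => hx f), ?_⟩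
        · rw [Finset.sum_const, nsmul_eq_mul, Finset.card_univ]; field_simp
        · intro f hf
          rw [inner_sum]
          have : ∑ g : T, (1 / (Fintype.card T : ℝ)) = 1 := by
            rw [Finset.sum_const, nsmul_eq_mul, Finset.card_univ]; field_simp
          refine lt_of_lt_of_eq ?_ this
          refine Finset.sum_lt_sum ?_ ⟨⟨f, hf⟩, Finset.mem_univ _, ?_⟩
          · intro g _
            have := hGP (hx g)
            rw [hP] at this
            rw [inner_smul_right]
            exact mul_le_of_le_one_right (by positivity) (this f hf)
          · rw [inner_smul_right]
            exact mul_lt_of_lt_one_right (by positivity) (hx1 ⟨f, hf⟩)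
    obtain ⟨z, hzG, hz⟩ := hz
    -- moving a bit in every direction stays in `P`
    have hopen : IsOpen {y : E | ∀ f ∈ T, inner ℝ f y < 1} := by
      have : {y : E | ∀ f ∈ T, inner ℝ f y < 1} = ⋂ f ∈ T, {y : E | inner ℝ f y < 1} := by
        ext; simp
      rw [this]
      exact isOpen_biInter_finset fun f _ =>
        isOpen_lt (continuous_const.inner continuous_id) continuous_const
    have hnhds : P ∈ nhds z := by
      refine Filter.mem_of_superset (hopen.mem_nhds hz) ?_
      rw [hP]
      exact fun y hy f hf => (hy f hf).le
    rw [hl] at hzG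
    have hmax : IsLocalMax l z := by
      filter_upwards [hnhds] with y hy using hzG.2 y hy
    have := hmax.hasFDerivAt_eq_zero l.hasFDerivAt
    exact hl0 this
  obtain ⟨f, hf, hf1⟩ := htight
  refine ⟨f, hf, ?_⟩
  have hf0 : f ≠ 0 := by
    rintro rfl
    simpa using hf1 x0 hx0
  -- the direction is the orthogonal complement of `f`
  have hdir : (affineSpan ℝ G).direction = (ℝ ∙ f)ᗮ := by
    refine Submodule.eq_of_le_of_finrank_eq ?_ ?_
    · rw [direction_affineSpan, vectorSpan_def, Submodule.span_le]
      rintro _ ⟨a, ha, b, hb, rfl⟩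
      rw [SetLike.mem_coe, Submodule.mem_orthogonal_singleton_iff_inner_right]
      simp only [vsub_eq_sub]
      rw [inner_sub_right, hf1 a ha, hf1 b hb, sub_self]
    · have h1 := Submodule.finrank_add_finrank_orthogonal (ℝ ∙ f)
      rw [finrank_span_singleton hf0] at h1
      omega
  have hlker : ∀ v ∈ (affineSpan ℝ G).direction, l v = 0 := by
    intro v hv
    rw [direction_affineSpan, vectorSpan_def] at hv
    have : Submodule.span ℝ (G -ᵥ G) ≤ LinearMap.ker (l : E →ₗ[ℝ] ℝ) := by
      rw [Submodule.span_le]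
      rintro _ ⟨a, ha, b, hb, rfl⟩
      rw [hl] at ha hb
      have h1 := ha.2 b hb.1
      have h2 := hb.2 a ha.1
      simp only [SetLike.mem_coe, LinearMap.mem_ker, vsub_eq_sub, ContinuousLinearMap.coe_coe, map_sub]
      linarith
    simpa using this hv
  apply Set.Subset.antisymm
  · exact fun y hy => ⟨hGP hy, hf1 y hy⟩
  · rintro y ⟨hyP, hy1⟩
    have h1 : l (y - x0) = 0 := by
      apply hlker
      rw [hdir, Submodule.mem_orthogonal_singleton_iff_inner_right, inner_sub_right, hy1,
        hf1 x0 hx0, sub_self]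
    rw [hl] at hx0 ⊢
    refine ⟨hyP, fun w hw => ?_⟩
    have := hx0.2 w hw
    rw [map_sub] at h1
    linarith

end facets

theorem GoodPair.polytope {n : ℕ} (hn : 2 ≤ n) {S T : Finset (Fin n → ℝ)} {A B : ℝ}
    (hB : 0 < B) (h : GoodPair S T A B) :
    ∃ (S' : Finset (EuclideanSpace ℝ (Fin n))) (P : Set (EuclideanSpace ℝ (Fin n)))
        (V : Set (EuclideanSpace ℝ (Fin n))) (Fs : Set (Set (EuclideanSpace ℝ (Fin n))))
        (r R : ℝ),
        P = convexHull ℝ (S' : Set (EuclideanSpace ℝ (Fin n))) ∧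
        (0 : EuclideanSpace ℝ (Fin n)) ∈ interior P ∧
        V = Set.extremePoints ℝ P ∧
        Fs = {G : Set (EuclideanSpace ℝ (Fin n)) |
          IsExposed ℝ P G ∧ Module.finrank ℝ (affineSpan ℝ G).direction = n - 1} ∧
        0 < r ∧ Metric.closedBall 0 r ⊆ P ∧ P ⊆ Metric.closedBall 0 R ∧
        V.Finite ∧ Fs.Finite ∧ Fs.ncard ≤ T.card ∧ V.ncard ≤ S.card ∧ (R / r) ^ 2 = A * B := by
  classical
  let τ : (Fin n → ℝ) →ₗ[ℝ] EuclideanSpace ℝ (Fin n) :=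
    (WithLp.linearEquiv 2 ℝ (Fin n → ℝ)).symm.toLinearMap
  have hin : ∀ f y : EuclideanSpace ℝ (Fin n), inner ℝ f y = ∑ i, f i * y i := by
    intro f y
    simp [PiLp.inner_apply, mul_comm]
  have hnorm : ∀ y : EuclideanSpace ℝ (Fin n), ‖y‖ ^ 2 = ∑ i, y i ^ 2 := by
    intro y
    rw [← real_inner_self_eq_norm_sq, hin]; simp [sq]
  have hτ : ∀ v i, τ v i = v i := fun v i => rfl
  let S' := S.image τ
  let T' := T.image τ
  have hA : 0 ≤ A := by
    obtain ⟨s, hs, -⟩ := h.cert 0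
    exact (Finset.sum_nonneg fun i _ => sq_nonneg (s i)).trans (h.normS s hs)
  have hP : convexHull ℝ (S' : Set (EuclideanSpace ℝ (Fin n))) =
      {y | ∀ f ∈ T', inner ℝ f y ≤ 1} := by
    apply Set.Subset.antisymm
    · refine convexHull_min ?_ ?_
      · intro s hs f hf
        obtain ⟨s, hs', rfl⟩ := Finset.mem_image.1 (Finset.mem_coe.1 hs)
        obtain ⟨f, hf', rfl⟩ := Finset.mem_image.1 hf
        rw [hin]
        refine le_trans (Finset.sum_le_sum fun i _ => ?_) (h.le_one s hs' f hf')
        rw [hτ, hτ, ← abs_mul]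
        exact le_abs_self _
      · intro x hx y hy a b ha hb hab f hf
        have h1 := hx f hf
        have h2 := hy f hf
        rw [inner_add_right, inner_smul_right, inner_smul_right]
        calc a * inner ℝ f x + b * inner ℝ f y ≤ a * 1 + b * 1 := by gcongr
          _ = 1 := by linarith
    · intro y hy
      by_contra hcon
      have hcl : IsClosed (convexHull ℝ (S' : Set (EuclideanSpace ℝ (Fin n)))) :=
        (S'.finite_toSet.isCompact_convexHull ℝ).isClosed
      obtain ⟨l, u, hu1, hu2⟩ := geometric_hahn_banach_closed_point (convex_convexHull ℝ _) hcl hcon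
      let L : EuclideanSpace ℝ (Fin n) := (InnerProductSpace.toDual ℝ _).symm l
      have hL : ∀ v, l v = inner ℝ L v := fun v => by simp [L]
      obtain ⟨s, hs, hs0, t, ht, hl⟩ := h.cert (fun i => L i)
      have h1 := hu1 (τ s) (subset_convexHull _ _ (Finset.mem_coe.2 (Finset.mem_image_of_mem _ hs)))
      have hty : ∀ t ∈ convexHull ℝ (T : Set (Fin n → ℝ)), inner ℝ (τ t) y ≤ 1 := by
        intro t ht
        have hsub : convexHull ℝ (T : Set (Fin n → ℝ)) ⊆ {t | inner ℝ (τ t) y ≤ 1} := by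
          refine convexHull_min ?_ ?_
          · intro t ht
            exact hy _ (Finset.mem_image_of_mem _ ht)
          · intro x hx z hz a b ha hb hab
            simp only [Set.mem_ofPred_eq] at hx hz ⊢
            rw [map_add, map_smul, map_smul, inner_add_left, real_inner_smul_left,
              real_inner_smul_left]
            calc a * inner ℝ (τ x) y + b * inner ℝ (τ z) y ≤ a * 1 + b * 1 := by gcongr
              _ = 1 := by linarith
        exact hsub ht
      have h2 : l y ≤ ∑ i, L i * s i := by
        have e : L = (∑ i, L i * s i) • τ t := by
          rw [← map_smul, ← hl]; rfl
        rw [hL]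
        calc inner ℝ L y = (∑ i, L i * s i) * inner ℝ (τ t) y := by
              rw [← real_inner_smul_left, ← e]
          _ ≤ (∑ i, L i * s i) * 1 := by
              have := hty t ht
              gcongr
          _ = _ := mul_one _
      rw [hL, hin] at h1
      simp only [hτ] at h1
      linarith
  have hr : 0 < 1 / √B := by positivity
  have hball : Metric.closedBall 0 (1 / √B) ⊆
      convexHull ℝ (S' : Set (EuclideanSpace ℝ (Fin n))) := by
    rw [hP]
    intro y hy f hf
    rw [mem_closedBall_zero_iff] at hy
    obtain ⟨f, hf', rfl⟩ := Finset.mem_image.1 hf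
    have h1 : ‖τ f‖ ≤ √B := Real.le_sqrt_of_sq_le (by rw [hnorm]; exact h.normT f hf')
    calc inner ℝ (τ f) y ≤ ‖τ f‖ * ‖y‖ := real_inner_le_norm _ _
      _ ≤ √B * (1 / √B) := by gcongr
      _ = 1 := by field_simp
  have hInt : (0 : EuclideanSpace ℝ (Fin n)) ∈
      interior (convexHull ℝ (S' : Set (EuclideanSpace ℝ (Fin n)))) :=
    mem_interior_iff_mem_nhds.2 (Filter.mem_of_superset (Metric.closedBall_mem_nhds 0 hr) hball)
  have hV : Set.extremePoints ℝ (convexHull ℝ (S' : Set (EuclideanSpace ℝ (Fin n)))) ⊆ S' :=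
    extremePoints_convexHull_subset
  have hF : {G : Set (EuclideanSpace ℝ (Fin n)) |
      IsExposed ℝ (convexHull ℝ (S' : Set (EuclideanSpace ℝ (Fin n)))) G ∧
        Module.finrank ℝ (affineSpan ℝ G).direction = n - 1} ⊆
      (T'.image (fun f => {y | y ∈ convexHull ℝ (S' : Set (EuclideanSpace ℝ (Fin n))) ∧
        inner ℝ f y = 1}) : Finset (Set (EuclideanSpace ℝ (Fin n)))) := by
    rintro G ⟨hG, hd⟩
    obtain ⟨f, hf, hfG⟩ := facet_aux T' _ G hP hInt (by simpa using hn) hG (by simpa using hd)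
    exact Finset.mem_coe.2 (Finset.mem_image.2 ⟨f, hf, hfG.symm⟩)
  refine ⟨S', _, _, _, 1 / √B, √A, rfl, hInt, rfl, rfl, hr, hball, ?_,
    S'.finite_toSet.subset hV, (Finset.finite_toSet _).subset hF, ?_, ?_, ?_⟩
  · refine convexHull_min ?_ (convex_closedBall _ _)
    intro s hs
    obtain ⟨s, hs', rfl⟩ := Finset.mem_image.1 (Finset.mem_coe.1 hs)
    rw [mem_closedBall_zero_iff]
    exact Real.le_sqrt_of_sq_le (by rw [hnorm]; exact h.normS s hs')
  · refine (Set.ncard_le_ncard hF (Finset.finite_toSet _)).trans ?_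
    rw [Set.ncard_coe_finset]
    exact Finset.card_image_le.trans Finset.card_image_le
  · refine (Set.ncard_le_ncard hV (Finset.finite_toSet _)).trans ?_
    rw [Set.ncard_coe_finset]
    exact Finset.card_image_le
  · rw [div_div_eq_mul_div, div_one, mul_pow, Real.sq_sqrt hA, Real.sq_sqrt hB.le]

theorem log_card_bounds {j k s : ℕ} (hj : 1 ≤ j) (hk : 1 ≤ k) (hs : 1 ≤ s) (Λ : ℝ)
    (hΛj : Real.logb 2 j ≤ Λ) (hΛk : Real.logb 2 k ≤ Λ) (hΛs : Real.logb 2 s ≤ Λ) (hΛ : 0 ≤ Λ) :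
    Real.logb 2 (((k * 3 ^ s) ^ j : ℕ) : ℝ) ≤ j * s * (2 * Λ + 2) ∧
    Real.logb 2 ((j * (s.factorial * 3 ^ s) ^ k : ℕ) : ℝ) ≤ k * s * (2 * Λ + 2) ∧
    (k * (1 + Real.log s)) * (j * 1) ≤ j * k * (2 * Λ + 2) := by
  have hj' : (1 : ℝ) ≤ j := by exact_mod_cast hj
  have hk' : (1 : ℝ) ≤ k := by exact_mod_cast hk
  have hs' : (1 : ℝ) ≤ s := by exact_mod_cast hs
  have h3 : Real.logb 2 3 ≤ 2 := by
    rw [Real.logb_le_iff_le_rpow (by norm_num) (by norm_num)]; norm_num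
  have hfac : Real.logb 2 (s.factorial : ℝ) ≤ s * Λ := by
    calc Real.logb 2 (s.factorial : ℝ) ≤ Real.logb 2 ((s : ℝ) ^ s) := by
          apply Real.logb_le_logb_of_le (by norm_num) (by exact_mod_cast Nat.factorial_pos s)
          exact_mod_cast Nat.factorial_le_pow s
      _ = s * Real.logb 2 s := by rw [Real.logb_pow]
      _ ≤ s * Λ := by gcongr
  have hfac0 : (s.factorial : ℝ) ≠ 0 := by exact_mod_cast (Nat.factorial_pos s).ne'
  have hp : ((3 : ℝ) ^ s) ≠ 0 := by positivity
  have hl3 : (s : ℝ) * Real.logb 2 3 ≤ s * 2 := by gcongr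
  refine ⟨?_, ?_, ?_⟩
  · push_cast
    rw [Real.logb_pow, Real.logb_mul (by positivity) hp, Real.logb_pow, mul_assoc]
    gcongr
    nlinarith
  · push_cast
    rw [Real.logb_mul (by positivity) (by positivity), Real.logb_pow,
      Real.logb_mul hfac0 hp, Real.logb_pow]
    have h1 : (k : ℝ) * (Real.logb 2 (s.factorial : ℝ) + s * Real.logb 2 3) ≤
        k * (s * Λ + s * 2) := by gcongr
    have h2 : Λ ≤ k * s * Λ := by
      have : (1 : ℝ) ≤ k * s := by nlinarith
      nlinarith
    nlinarith
  · have h1 : Real.log s ≤ Λ := by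
      refine le_trans ?_ hΛs
      rw [Real.logb, le_div_iff₀ (Real.log_pos (by norm_num))]
      have := Real.log_two_lt_d9
      have h0 := Real.log_nonneg hs'
      nlinarith
    have : (1 + Real.log s) ≤ 2 * Λ + 2 := by linarith
    calc (k * (1 + Real.log s)) * (j * 1) = j * k * (1 + Real.log s) := by ring
      _ ≤ _ := by gcongr

theorem ceil_bounds {n : ℕ} (hn : 2 ≤ n) {x : ℝ} (hx0 : 0 ≤ x) (hx1 : x ≤ 1) :
    1 ≤ ⌈(n : ℝ) ^ x⌉₊ ∧ (n : ℝ) ^ x ≤ ⌈(n : ℝ) ^ x⌉₊ ∧ (⌈(n : ℝ) ^ x⌉₊ : ℝ) ≤ 2 * (n : ℝ) ^ x ∧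
      Real.logb 2 (⌈(n : ℝ) ^ x⌉₊ : ℝ) ≤ Real.logb 2 (2 * n) := by
  have hn1 : (1 : ℝ) ≤ n := by exact_mod_cast (by omega : 1 ≤ n)
  have h1 : (1 : ℝ) ≤ (n : ℝ) ^ x := Real.one_le_rpow hn1 hx0
  have h2 : (n : ℝ) ^ x ≤ n := by
    simpa using Real.rpow_le_rpow_of_exponent_le hn1 hx1
  have h3 : (⌈(n : ℝ) ^ x⌉₊ : ℝ) ≤ 2 * (n : ℝ) ^ x := by
    have := (Nat.ceil_lt_add_one (by linarith : 0 ≤ (n : ℝ) ^ x)).le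
    linarith
  have h4 : 1 ≤ ⌈(n : ℝ) ^ x⌉₊ := Nat.one_le_ceil_iff.2 (by linarith)
  refine ⟨h4, Nat.le_ceil _, h3, ?_⟩
  apply Real.logb_le_logb_of_le (by norm_num) (by exact_mod_cast h4)
  linarith

theorem mul_pow_bound {N p q ε K D u v W : ℝ} (hN : 1 ≤ N) (hu : u ≤ 2 * N ^ p) (hv : v ≤ 2 * N ^ q)
    (hu0 : 0 ≤ u) (hv0 : 0 ≤ v) (hD0 : 0 ≤ D) (hD : D ≤ K * N ^ ε) (hW : p + q + ε ≤ W) (hK : 0 ≤ K) :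
    u * v * D ≤ 4 * K * N ^ W := by
  have hN0 : 0 < N := by linarith
  calc u * v * D ≤ (2 * N ^ p) * (2 * N ^ q) * (K * N ^ ε) := by gcongr
    _ = 4 * K * N ^ (p + q + ε) := by
      rw [Real.rpow_add hN0, Real.rpow_add hN0]; ring
    _ ≤ _ := by
      gcongr


/-- **Theorem 1.3, part 1.** Let `a ∈ (0,1)` be rational and `δ ∈ (0,1)`. There is a
constant `C > 0` depending only on `a` and `δ`, and for every `n ≥ 2` a polytope
`P_n ⊂ ℝ^n` (the convex hull of a finite set, with the origin in its interior, with
vertex set `V`, facet set `ℱ` -- the exposed faces whose affine span has dimension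
`n-1` -- and with `r·B₂ⁿ ⊆ P_n ⊆ R·B₂ⁿ`), such that `log₂|ℱ| ≤ C·n^{1-a}`,
`log₂|V| ≤ C·n^{a+δ(1-a)}` and `(R/r)² ≤ C·n^{1-δ+a}`; consequently
`log₂|V| · log₂|ℱ| · (R/r)² ≤ C³·n^{2+a(1-δ)}`. -/
theorem flm_near_saturation_rational (a : ℝ) (ha : a ∈ Set.Ioo (0 : ℝ) 1)
    (haQ : ∃ s : ℚ, a = (s : ℝ)) (δ : ℝ) (hδ : δ ∈ Set.Ioo (0 : ℝ) 1) :
    ∃ C : ℝ, 0 < C ∧ ∀ n : ℕ, 2 ≤ n →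
      ∃ (S : Finset (EuclideanSpace ℝ (Fin n))) (P : Set (EuclideanSpace ℝ (Fin n)))
        (V : Set (EuclideanSpace ℝ (Fin n))) (Fs : Set (Set (EuclideanSpace ℝ (Fin n))))
        (r R : ℝ),
        P = convexHull ℝ (S : Set (EuclideanSpace ℝ (Fin n))) ∧
        (0 : EuclideanSpace ℝ (Fin n)) ∈ interior P ∧
        V = Set.extremePoints ℝ P ∧
        Fs = {G : Set (EuclideanSpace ℝ (Fin n)) |
          IsExposed ℝ P G ∧ Module.finrank ℝ (affineSpan ℝ G).direction = n - 1} ∧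
        0 < r ∧ Metric.closedBall 0 r ⊆ P ∧ P ⊆ Metric.closedBall 0 R ∧
        V.Finite ∧ Fs.Finite ∧
        Real.logb 2 (Fs.ncard) ≤ C * (n : ℝ) ^ (1 - a) ∧
        Real.logb 2 (V.ncard) ≤ C * (n : ℝ) ^ (a + δ * (1 - a)) ∧
        (R / r) ^ 2 ≤ C * (n : ℝ) ^ (1 - δ + a) ∧
        Real.logb 2 (V.ncard) * Real.logb 2 (Fs.ncard) * (R / r) ^ 2 ≤
          C ^ 3 * (n : ℝ) ^ (2 + a * (1 - δ)) := by
  obtain ⟨ha0, ha1⟩ := ha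
  obtain ⟨hδ0, hδ1⟩ := hδ
  have hpos1 : 0 < a * (1 - δ) := mul_pos ha0 (by linarith)
  have hpos2 : 0 < δ * (1 - a) := mul_pos hδ0 (by linarith)
  have hpos3 : 0 < (1 - δ) * (1 - a) := mul_pos (by linarith) (by linarith)
  obtain ⟨ε, hε, hε1, hε2⟩ : ∃ ε : ℝ, 0 < ε ∧ 3 * ε ≤ a * (1 - δ) ∧ 2 * ε ≤ δ * (1 - a) := by
    refine ⟨min (a * (1 - δ) / 3) (δ * (1 - a) / 2), by positivity, ?_, ?_⟩
    · have := min_le_left (a * (1 - δ) / 3) (δ * (1 - a) / 2); linarith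
    · have := min_le_right (a * (1 - δ) / 3) (δ * (1 - a) / 2); linarith
  obtain ⟨x, hx⟩ : ∃ x, x = (1 - δ) * (1 - a) + ε := ⟨_, rfl⟩
  obtain ⟨y, hy⟩ : ∃ y, y = a + ε := ⟨_, rfl⟩
  obtain ⟨z, hz⟩ : ∃ z, z = δ * (1 - a) - 2 * ε := ⟨_, rfl⟩
  have hxyz : x + y + z = 1 := by rw [hx, hy, hz]; ring
  have hx0 : 0 ≤ x := by rw [hx]; positivity
  have hy0 : 0 ≤ y := by rw [hy]; positivity
  have hz0 : 0 ≤ z := by rw [hz]; linarith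
  have hlog2 : 0 < Real.log 2 := Real.log_pos (by norm_num)
  obtain ⟨K, hK⟩ : ∃ K : ℝ, K = 4 + 2 / (ε * Real.log 2) := ⟨_, rfl⟩
  have hK0 : 0 < K := by rw [hK]; positivity
  refine ⟨4 * K, by positivity, fun n hn => ?_⟩
  have hn1 : (1 : ℝ) ≤ n := by exact_mod_cast (by omega : 1 ≤ n)
  have hn0 : (0 : ℝ) < n := by linarith
  obtain ⟨hj1, hjl, hju, hjΛ⟩ := ceil_bounds hn hx0 (by linarith)
  obtain ⟨hk1, hkl, hku, hkΛ⟩ := ceil_bounds hn hy0 (by linarith)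
  obtain ⟨hs1, hsl, hsu, hsΛ⟩ := ceil_bounds hn hz0 (by linarith)
  generalize ⌈(n : ℝ) ^ x⌉₊ = j at *
  generalize ⌈(n : ℝ) ^ y⌉₊ = k at *
  generalize ⌈(n : ℝ) ^ z⌉₊ = s at *
  have hcard : n ≤ j * (k * s) := by
    have : (n : ℝ) ≤ j * (k * s) := by
      calc (n : ℝ) = n ^ x * (n ^ y * n ^ z) := by
            rw [← Real.rpow_add hn0, ← Real.rpow_add hn0, ← add_assoc, hxyz, Real.rpow_one]
        _ ≤ _ := by gcongr
    exact_mod_cast this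
  have hΛ0 : 0 ≤ Real.logb 2 (2 * n) := Real.logb_nonneg (by norm_num) (by linarith)
  have hD : 2 * Real.logb 2 (2 * n) + 2 ≤ K * (n : ℝ) ^ ε := by
    have h1 : Real.logb 2 (2 * n) = 1 + Real.log n / Real.log 2 := by
      rw [Real.logb_mul (by norm_num) hn0.ne', Real.logb_self_eq_one (by norm_num)]; rfl
    have h2 : Real.log n ≤ (n : ℝ) ^ ε / ε := Real.log_le_rpow_div hn0.le hε
    have h3 : (1 : ℝ) ≤ (n : ℝ) ^ ε := Real.one_le_rpow hn1 hε.le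
    have h4 : Real.log n / Real.log 2 ≤ (n : ℝ) ^ ε / ε / Real.log 2 := by gcongr
    have h5 : K * (n : ℝ) ^ ε = 4 * (n : ℝ) ^ ε + 2 * ((n : ℝ) ^ ε / ε / Real.log 2) := by
      rw [hK]; field_simp
    rw [h1, h5]; linarith
  have : Nonempty (Fin j) := ⟨⟨0, hj1⟩⟩
  have : Nonempty (Fin k) := ⟨⟨0, hk1⟩⟩
  obtain ⟨b1, b2, b3⟩ := log_card_bounds hj1 hk1 hs1 _ hjΛ hkΛ hsΛ hΛ0
  generalize 2 * Real.logb 2 (2 * n) + 2 = D at *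
  obtain ⟨e⟩ : Nonempty (Fin n ↪ Fin j × (Fin k × Fin s)) :=
    Function.Embedding.nonempty_of_card_le (by simpa using hcard)
  have hgood := (((base_good s).linf (Fin k)).lone (Fin j)).restrict e e.injective
  obtain ⟨S', P, V, Fs, r, R, hP, hInt, hV, hF, hr, hball, hR, hVf, hFf, hFc, hVc, hRr⟩ :=
    hgood.polytope hn (by simpa using Nat.lt_of_lt_of_le Nat.zero_lt_one hj1)
  rw [Fintype.card_fin, Fintype.card_fin] at hRr
  have hj0 : (0 : ℝ) ≤ j := by positivity
  have hD0 : 0 ≤ D := by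
    have : (0 : ℝ) ≤ j * s * D := by
      refine le_trans ?_ b1
      apply Real.logb_nonneg (by norm_num)
      exact_mod_cast Nat.one_le_pow _ _ (by positivity)
    have hjs : (0 : ℝ) < j * s := by positivity
    exact nonneg_of_mul_nonneg_right this hjs
  have logle : ∀ p q : ℕ, 1 ≤ q → p ≤ q → Real.logb 2 (p : ℝ) ≤ Real.logb 2 (q : ℝ) := by
    intro p q hq hpq
    rcases Nat.eq_zero_or_pos p with rfl | hp
    · simp only [Nat.cast_zero, Real.logb_zero]
      exact Real.logb_nonneg (by norm_num) (by exact_mod_cast hq)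
    · exact Real.logb_le_logb_of_le (by norm_num) (by exact_mod_cast hp) (by exact_mod_cast hpq)
  have log0 : ∀ p : ℕ, 0 ≤ Real.logb 2 (p : ℝ) := by
    intro p
    rcases Nat.eq_zero_or_pos p with rfl | hp
    · simp
    · exact Real.logb_nonneg (by norm_num) (by exact_mod_cast hp)
  have hFcard : Fs.ncard ≤ (k * 3 ^ s) ^ j := by
    refine hFc.trans (Finset.card_image_le.trans ((card_prodF _ _).trans ?_))
    rw [Fintype.card_fin]
    refine Nat.pow_le_pow_left ((card_sumF _ _).trans ?_) _
    rw [Fintype.card_fin]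
    exact Nat.mul_le_mul_left _ (card_baseT s)
  have hVcard : V.ncard ≤ j * (s.factorial * 3 ^ s) ^ k := by
    refine hVc.trans (Finset.card_image_le.trans ((card_sumF _ _).trans ?_))
    rw [Fintype.card_fin]
    refine Nat.mul_le_mul_left _ ((card_prodF _ _).trans ?_)
    rw [Fintype.card_fin]
    exact Nat.pow_le_pow_left (card_baseS s) _
  have c1 : Real.logb 2 (Fs.ncard) ≤ 4 * K * (n : ℝ) ^ (1 - a) :=
    ((logle _ _ (Nat.one_le_pow _ _ (by positivity)) hFcard).trans b1).trans
      (mul_pow_bound hn1 hju hsu (by positivity) (by positivity) hD0 hD (by linarith) hK0.le)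
  have c2 : Real.logb 2 (V.ncard) ≤ 4 * K * (n : ℝ) ^ (a + δ * (1 - a)) :=
    ((logle _ _ (Nat.mul_pos hj1 (by positivity)) hVcard).trans b2).trans
      (mul_pow_bound hn1 hku hsu (by positivity) (by positivity) hD0 hD (by linarith) hK0.le)
  have c3 : (R / r) ^ 2 ≤ 4 * K * (n : ℝ) ^ (1 - δ + a) := by
    rw [hRr]
    exact b3.trans
      (mul_pow_bound hn1 hju hku (by positivity) (by positivity) hD0 hD (by nlinarith) hK0.le)
  refine ⟨S', P, V, Fs, r, R, hP, hInt, hV, hF, hr, hball, hR, hVf, hFf, c1, c2, c3, ?_⟩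
  have l1 := log0 Fs.ncard
  have l2 := log0 V.ncard
  calc Real.logb 2 (V.ncard) * Real.logb 2 (Fs.ncard) * (R / r) ^ 2
      ≤ (4 * K * (n : ℝ) ^ (a + δ * (1 - a))) * (4 * K * (n : ℝ) ^ (1 - a)) *
        (4 * K * (n : ℝ) ^ (1 - δ + a)) := by gcongr
    _ = (4 * K) ^ 3 * ((n : ℝ) ^ (a + δ * (1 - a)) * (n : ℝ) ^ (1 - a) * (n : ℝ) ^ (1 - δ + a)) := by
      ring
    _ = _ := by
      rw [← Real.rpow_add hn0, ← Real.rpow_add hn0]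
      congr 2; ring
end

section
/- Let a ∈ (0,1) be irrational and δ ∈ (0,1). Then there exists a constant C > 0 depending only on a and δ, and for every integer n ≥ 2 a polytope P_n ⊂ ℝ^n, such that log₂|ℱ(P_n)| ≤ C·n^{1−a}, log₂|V(P_n)| ≤ C·n^{a+δ(1−a)+C/√(log n)}, and (R(P_n)/r(P_n))² ≤ C·n^{1−δ+a}; consequently log₂|V(P_n)| · log₂|ℱ(P_n)| · (R(P_n)/r(P_n))² ≤ C³·n^{2+a(1−δ)+C/√(log n)}. (Theorem 1.3, part 2.) -/
namespace FLMAux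

/-- increments of the square root -/
noncomputable def w (j : ℕ) : ℝ := Real.sqrt (j + 1) - Real.sqrt j

lemma w_nonneg (j : ℕ) : 0 ≤ w j := by
  unfold w
  have : Real.sqrt j ≤ Real.sqrt (j + 1) := Real.sqrt_le_sqrt (by linarith)
  linarith

lemma w_mul (j : ℕ) : w j * (Real.sqrt (j + 1) + Real.sqrt j) = 1 := by
  unfold w
  have h1 : Real.sqrt ((j : ℝ) + 1) ^ 2 = j + 1 := Real.sq_sqrt (by positivity)
  have h2 : Real.sqrt (j : ℝ) ^ 2 = j := Real.sq_sqrt (by positivity)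
  nlinarith

lemma w_anti {i j : ℕ} (h : i ≤ j) : w j ≤ w i := by
  have hi := w_mul i
  have hj := w_mul j
  have h' : (i : ℝ) ≤ j := by exact_mod_cast h
  have h1 : Real.sqrt (i : ℝ) ≤ Real.sqrt j := Real.sqrt_le_sqrt h'
  have h2 : Real.sqrt ((i : ℝ) + 1) ≤ Real.sqrt (j + 1) := Real.sqrt_le_sqrt (by linarith)
  have h3 : 0 < Real.sqrt ((i : ℝ) + 1) := Real.sqrt_pos.2 (by positivity)
  have h4 : 0 ≤ Real.sqrt (i : ℝ) := Real.sqrt_nonneg _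
  by_contra hc
  push Not at hc
  have := w_nonneg i
  nlinarith

lemma w_sq (j : ℕ) : w j ^ 2 ≤ 1 / ((j : ℝ) + 1) := by
  have hj := w_mul j
  have h1 : Real.sqrt ((j : ℝ) + 1) ^ 2 = j + 1 := Real.sq_sqrt (by positivity)
  have h4 : 0 ≤ Real.sqrt (j : ℝ) := Real.sqrt_nonneg _
  have h3 : 0 < Real.sqrt ((j : ℝ) + 1) := Real.sqrt_pos.2 (by positivity)
  have := w_nonneg j
  have h5 : w j * Real.sqrt (j + 1) ≤ 1 := by nlinarith
  rw [le_div_iff₀ (by positivity), ← h1, ← mul_pow]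
  exact pow_le_one₀ (by positivity) h5

lemma sum_w_range (j : ℕ) : ∑ i ∈ Finset.range j, w i = Real.sqrt j := by
  induction j with
  | zero => simp
  | succ k ih => rw [Finset.sum_range_succ, ih]; unfold w; push_cast; ring

lemma sum_w_le (B : Finset ℕ) : ∑ i ∈ B, w i ≤ Real.sqrt B.card := by
  induction B using Finset.induction_on_max with
  | empty => simp
  | insert a s ha ih =>
    have hn : a ∉ s := fun h => lt_irrefl _ (ha a h)
    rw [Finset.sum_insert hn, Finset.card_insert_of_notMem hn]
    have hc : s.card ≤ a := by
      have : s ⊆ Finset.range a := fun x hx => Finset.mem_range.2 (ha x hx)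
      simpa using Finset.card_le_card this
    have := w_anti hc
    have h2 : w s.card = Real.sqrt (s.card + 1) - Real.sqrt s.card := rfl
    push_cast
    linarith

lemma sum_w_sq (N : ℕ) : ∑ i ∈ Finset.range N, w i ^ 2 ≤ 1 + Real.log N := by
  have h := harmonic_le_one_add_log N
  refine le_trans ?_ h
  unfold harmonic
  push_cast
  refine Finset.sum_le_sum fun i _ => ?_
  have := w_sq i
  simpa using this

lemma abel (N : ℕ) : ∀ (d z : Fin N → ℝ) (c : ℝ), 0 ≤ c → Antitone z → (∀ i, c ≤ z i) →
    (∀ j ≤ N, 0 ≤ ∑ i : Fin N, if i.val < j then d i else 0) →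
    c * ∑ i, d i ≤ ∑ i, d i * z i := by
  induction N with
  | zero => intro d z c _ _ _ _; simp
  | succ N ih =>
    intro d z c hc hz hcz hd
    have h1 := ih (fun i => d i.castSucc) (fun i => z i.castSucc) (z (Fin.last N))
      (hc.trans (hcz _)) (fun i j h => hz (by simpa using h)) (fun i => hz (Fin.le_last _))
      (by
        intro j hj
        have := hd j (by omega)
        rw [Fin.sum_univ_castSucc] at this
        simpa [not_lt.2 hj] using this)
    have h2 := hd (N + 1) le_rfl
    have h3 : (∑ i : Fin (N + 1), if i.val < N + 1 then d i else 0) = ∑ i, d i :=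
      Finset.sum_congr rfl fun i _ => by simp [i.2]
    rw [h3] at h2
    have h4 : c * ∑ i, d i ≤ z (Fin.last N) * ∑ i, d i :=
      mul_le_mul_of_nonneg_right (hcz _) h2
    refine h4.trans ?_
    rw [Fin.sum_univ_castSucc, Fin.sum_univ_castSucc]
    nlinarith

/-- greedy bound -/
lemma greedy {N : ℕ} (u z : Fin N → ℝ) (hz : ∀ p, 0 ≤ z p)
    (hu : ∀ A : Finset (Fin N), ∑ p ∈ A, u p ≤ Real.sqrt A.card) :
    ∃ σ : Equiv.Perm (Fin N), ∑ p, u p * z p ≤ ∑ p, w (σ p) * z p := by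
  set π := Tuple.sort (fun p => - z p)
  have hm : Monotone ((fun p => - z p) ∘ π) := Tuple.monotone_sort _
  refine ⟨π.symm, ?_⟩
  have key := abel N (fun i => w i - u (π i)) (fun i => z (π i)) 0 le_rfl
    (fun i j h => by have := hm h; simp at this; exact this) (fun i => hz _) (by
      intro j hj
      have e1 : (∑ i : Fin N, if i.val < j then w i else 0) = Real.sqrt j := by
        rw [← sum_w_range, ← Finset.sum_range (fun i => if i < j then w i else 0),
          ← Finset.sum_filter]
        congr 1
        ext i; simp; omega
      have e2 : (∑ i : Fin N, if i.val < j then (1 : ℕ) else 0) = j := by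
        rw [← Finset.sum_range (fun i => if i < j then (1 : ℕ) else 0), ← Finset.sum_filter]
        have : (Finset.range N).filter (· < j) = Finset.range j := by ext i; simp; omega
        rw [this]; simp
      have hA := hu (Finset.univ.filter fun p => (π.symm p).val < j)
      rw [Finset.sum_filter, ← Equiv.sum_comp π (fun p => if (π.symm p).val < j then u p else 0),
        Finset.card_filter,
        ← Equiv.sum_comp π (fun p => if (π.symm p).val < j then (1 : ℕ) else 0)] at hA
      simp only [Equiv.symm_apply_apply] at hA
      rw [e2] at hA
      have : (∑ i : Fin N, if i.val < j then w i - u (π i) else 0) =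
          (∑ i : Fin N, if i.val < j then w i else 0) -
            ∑ i : Fin N, if i.val < j then u (π i) else 0 := by
        rw [← Finset.sum_sub_distrib]
        refine Finset.sum_congr rfl fun i _ => ?_
        split_ifs <;> simp
      rw [this, e1]
      linarith)
  rw [← Equiv.sum_comp π (fun p => u p * z p), ← Equiv.sum_comp π (fun p => w (π.symm p) * z p)]
  simp only [Equiv.symm_apply_apply]
  have : ∑ i : Fin N, (w i - u (π i)) * z (π i) = ∑ i : Fin N, w i * z (π i) - ∑ i, u (π i) * z (π i) := by
    rw [← Finset.sum_sub_distrib]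
    exact Finset.sum_congr rfl fun i _ => by ring
  simp only [zero_mul] at key
  linarith

lemma sum_inj_le {α β : Type*} [DecidableEq β] (Q : Finset α) (B : Finset β) (φ : α → β)
    (hφ : Set.InjOn φ Q) (hm : ∀ a ∈ Q, φ a ∈ B) (g : β → ℝ) (hg : ∀ b, 0 ≤ g b) :
    ∑ a ∈ Q, g (φ a) ≤ ∑ b ∈ B, g b := by
  rw [← Finset.sum_image (f := g) hφ]
  exact Finset.sum_le_sum_of_subset_of_nonneg (Finset.image_subset_iff.2 hm) fun b _ _ => hg b

end FLMAux
namespace FLMAux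
open scoped RealInnerProductSpace

abbrev E (n : ℕ) := EuclideanSpace ℝ (Fin n)

lemma hull_eq {n : ℕ} (S T : Finset (E n))
    (hST : ∀ s ∈ S, ∀ t ∈ T, ⟪t, s⟫ ≤ 1)
    (hdual : ∀ x : E n, (∀ t ∈ T, ⟪t, x⟫ ≤ 1) → ∀ y : E n, ∃ s ∈ S, ⟪y, x⟫ ≤ ⟪y, s⟫) :
    convexHull ℝ (S : Set (E n)) = {x | ∀ t ∈ T, ⟪t, x⟫ ≤ 1} := by
  apply Set.Subset.antisymm
  · refine convexHull_min (fun s hs t ht => hST s hs t ht) ?_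
    intro x hx y hy a b ha hb hab t ht
    have h1 := hx t ht
    have h2 := hy t ht
    simp only [inner_add_right, inner_smul_right]
    nlinarith
  · intro x hx
    by_contra hc
    have hcl : IsClosed (convexHull ℝ (S : Set (E n))) :=
      (S.finite_toSet.isCompact_convexHull (𝕜 := ℝ)).isClosed
    obtain ⟨f, u, hf, hu⟩ := geometric_hahn_banach_closed_point (convex_convexHull ℝ _) hcl hc
    obtain ⟨s, hs, hle⟩ := hdual x hx ((InnerProductSpace.toDual ℝ (E n)).symm f)
    simp only [InnerProductSpace.toDual_symm_apply] at hle
    have := hf s (subset_convexHull ℝ _ hs)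
    linarith

lemma facet_aux {n : ℕ} (hn : 2 ≤ n) (T : Finset (E n)) (P : Set (E n))
    (hT : T.Nonempty)
    (hP : P = {x | ∀ t ∈ T, ⟪t, x⟫ ≤ 1}) (G : Set (E n)) (hG : IsExposed ℝ P G)
    (hd : Module.finrank ℝ (affineSpan ℝ G).direction = n - 1) :
    ∃ t ∈ T, G = {x ∈ P | ⟪t, x⟫ = 1} := by
  have hne : G.Nonempty := by
    rw [Set.nonempty_iff_ne_empty]
    intro h0
    rw [h0, AffineSubspace.span_empty, AffineSubspace.direction_bot, finrank_bot] at hd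
    omega
  obtain ⟨l, hl⟩ := hG hne
  have hPc : Convex ℝ P := by
    rw [hP]
    intro x hx y hy a b ha hb hab t ht
    have h1 := hx t ht
    have h2 := hy t ht
    simp only [inner_add_right, inner_smul_right]
    nlinarith
  have hGc : Convex ℝ G := hG.convex hPc
  have hGP : G ⊆ P := hG.subset
  have hex : ∃ t ∈ T, ∀ x ∈ G, ⟪t, x⟫ = 1 := by
    by_contra hcon
    push Not at hcon
    choose! f hfG hf1 using hcon
    have hcard : (0 : ℝ) < T.card := by exact_mod_cast hT.card_pos
    set xb : E n := ∑ t ∈ T, ((T.card : ℝ)⁻¹) • f t with hxb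
    have hxG : xb ∈ G := by
      refine hGc.sum_mem (fun _ _ => by positivity) ?_ (fun t ht => hfG t ht)
      simp; field_simp
    have hlt : ∀ t ∈ T, ⟪t, xb⟫ < 1 := by
      intro t ht
      rw [hxb, inner_sum]
      have : ∑ s ∈ T, (T.card : ℝ)⁻¹ = 1 := by simp; field_simp
      rw [← this]
      refine Finset.sum_lt_sum ?_ ⟨t, ht, ?_⟩
      · intro s hs
        have := hGP (hfG s hs)
        rw [hP] at this
        have := this t ht
        rw [inner_smul_right]
        have h0 : (0 : ℝ) ≤ (T.card : ℝ)⁻¹ := by positivity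
        nlinarith
      · have h1 := hGP (hfG t ht)
        rw [hP] at h1
        have h1 := lt_of_le_of_ne (h1 t ht) (hf1 t ht)
        rw [inner_smul_right]
        have h0 : (0 : ℝ) < (T.card : ℝ)⁻¹ := by positivity
        nlinarith
    have hxint : xb ∈ interior P := by
      rw [mem_interior]
      refine ⟨⋂ t ∈ T, {x | ⟪t, x⟫ < 1}, ?_, ?_, ?_⟩
      · intro x hx
        rw [hP]
        intro t ht
        simp only [Set.mem_iInter] at hx
        exact (hx t ht).le
      · refine isOpen_biInter_finset fun t _ => ?_
        exact isOpen_lt (by fun_prop) continuous_const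
      · simpa using hlt
    have hmax : IsLocalMax l xb := by
      filter_upwards [mem_interior_iff_mem_nhds.1 hxint] with y hy
      rw [hl] at hxG
      exact hxG.2 y hy
    have hl0 : l = 0 := by
      have := hmax.hasFDerivAt_eq_zero l.hasFDerivAt
      exact this
    have hGeq : G = P := by
      rw [hl, hl0]; ext; simp
    have htop : affineSpan ℝ G = ⊤ := by
      rw [hGeq]
      exact affineSpan_eq_top_of_nonempty_interior (by
        rw [hPc.convexHull_eq]; exact ⟨xb, hxint⟩)
    rw [htop, AffineSubspace.direction_top, finrank_top, finrank_euclideanSpace_fin] at hd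
    omega
  obtain ⟨t, ht, htG⟩ := hex
  refine ⟨t, ht, Set.Subset.antisymm (fun x hx => ⟨hGP hx, htG x hx⟩) ?_⟩
  rintro x ⟨hxP, hx1⟩
  obtain ⟨g, hg⟩ := hne
  have ht0 : t ≠ 0 := by
    rintro rfl
    have := htG g hg
    simp at this
  -- direction equals the orthogonal complement of t
  have hle : (affineSpan ℝ G).direction ≤ (ℝ ∙ t)ᗮ := by
    rw [direction_affineSpan, vectorSpan_def, Submodule.span_le]
    rintro _ ⟨a, ha, b, hb, rfl⟩
    rw [SetLike.mem_coe, Submodule.mem_orthogonal_singleton_iff_inner_right]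
    simp [inner_sub_right, htG a ha, htG b hb]
  have hfr : Module.finrank ℝ (ℝ ∙ t)ᗮ = n - 1 := by
    have h1 := Submodule.finrank_add_finrank_orthogonal (ℝ ∙ t)
    rw [finrank_span_singleton ht0] at h1
    simp at h1
    omega
  have heq := Submodule.eq_of_le_of_finrank_eq hle (hd.trans hfr.symm)
  have hxd : x - g ∈ (affineSpan ℝ G).direction := by
    rw [heq, Submodule.mem_orthogonal_singleton_iff_inner_right]
    simp [inner_sub_right, hx1, htG g hg]
  -- l vanishes on the direction
  have hlk : (affineSpan ℝ G).direction ≤ LinearMap.ker (l : E n →ₗ[ℝ] ℝ) := by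
    rw [direction_affineSpan, vectorSpan_def, Submodule.span_le]
    rintro _ ⟨a, ha, b, hb, rfl⟩
    have ha' := ha
    have hb' := hb
    rw [hl] at ha' hb'
    have h1 := ha'.2 b hb'.1
    have h2 := hb'.2 a ha'.1
    simp
    linarith
  have h0 := hlk hxd
  simp at h0
  rw [hl] at hg ⊢
  refine ⟨hxP, fun y hy => ?_⟩
  have := hg.2 y hy
  linarith

lemma polytope_main {n : ℕ} (hn : 2 ≤ n) (S T : Finset (E n)) (hT : T.Nonempty)
    (hST : ∀ s ∈ S, ∀ t ∈ T, ⟪t, s⟫ ≤ 1)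
    (hdual : ∀ x : E n, (∀ t ∈ T, ⟪t, x⟫ ≤ 1) → ∀ y : E n, ∃ s ∈ S, ⟪y, x⟫ ≤ ⟪y, s⟫)
    (r R : ℝ) (hr : 0 < r) (hTr : ∀ t ∈ T, ‖t‖ * r ≤ 1) (hSR : ∀ s ∈ S, ‖s‖ ≤ R) :
    ∃ (P : Set (E n)) (V : Set (E n)) (Fs : Set (Set (E n))),
        P = convexHull ℝ (S : Set (E n)) ∧
        (0 : E n) ∈ interior P ∧
        V = Set.extremePoints ℝ P ∧
        Fs = {G : Set (E n) |
          IsExposed ℝ P G ∧ Module.finrank ℝ (affineSpan ℝ G).direction = n - 1} ∧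
        Metric.closedBall 0 r ⊆ P ∧ P ⊆ Metric.closedBall 0 R ∧
        V.Finite ∧ Fs.Finite ∧ V.ncard ≤ S.card ∧ Fs.ncard ≤ T.card := by
  have hP := hull_eq S T hST hdual
  have hball : Metric.closedBall 0 r ⊆ convexHull ℝ (S : Set (E n)) := by
    rw [hP]
    intro x hx t ht
    rw [mem_closedBall_zero_iff] at hx
    calc ⟪t, x⟫ ≤ ‖t‖ * ‖x‖ := real_inner_le_norm _ _
      _ ≤ ‖t‖ * r := by gcongr
      _ ≤ 1 := hTr t ht
  have hV : Set.extremePoints ℝ (convexHull ℝ (S : Set (E n))) ⊆ S :=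
    extremePoints_convexHull_subset
  have hF : {G : Set (E n) | IsExposed ℝ (convexHull ℝ (S : Set (E n))) G ∧
      Module.finrank ℝ (affineSpan ℝ G).direction = n - 1} ⊆
      (fun t => {x ∈ convexHull ℝ (S : Set (E n)) | ⟪t, x⟫ = 1}) '' (T : Set (E n)) := by
    rintro G ⟨h1, h2⟩
    obtain ⟨t, ht, h⟩ := facet_aux hn T _ hT hP G h1 h2
    exact ⟨t, ht, h.symm⟩
  refine ⟨_, _, _, rfl, ?_, rfl, rfl, hball, ?_, S.finite_toSet.subset hV,
    (T.finite_toSet.image _).subset hF, ?_, ?_⟩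
  · exact mem_interior_iff_mem_nhds.2
      (Filter.mem_of_superset (Metric.closedBall_mem_nhds _ hr) hball)
  · refine convexHull_min (fun s hs => ?_) (convex_closedBall _ _)
    rw [mem_closedBall_zero_iff]; exact hSR s hs
  · rw [← Set.ncard_coe_finset S]
    exact Set.ncard_le_ncard hV S.finite_toSet
  · refine (Set.ncard_le_ncard hF (T.finite_toSet.image _)).trans ?_
    rw [← Set.ncard_coe_finset T]
    exact Set.ncard_image_le T.finite_toSet

end FLMAux
namespace FLMAux
open scoped RealInnerProductSpace

/-- sign of a boolean -/
def sg (b : Bool) : ℝ := if b then 1 else -1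

lemma abs_sg (b : Bool) : |sg b| = 1 := by cases b <;> simp [sg]

lemma sg_sq (b : Bool) : sg b ^ 2 = 1 := by cases b <;> simp [sg]

lemma sg_mul (y : ℝ) : sg (decide (0 ≤ y)) * y = |y| := by
  by_cases h : 0 ≤ y
  · simp [sg, h, abs_of_nonneg h]
  · simp [sg, h, abs_of_neg (not_le.1 h)]

variable {n N m k : ℕ}

/-- facet functionals -/
noncomputable def tvec (e : Fin n → Fin N × Fin m × Fin k)
    (D : Finset (Fin N) × (Fin N → Fin m → Fin n) × (Fin N → Fin m → Bool)) : E n :=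
  WithLp.toLp 2 fun i =>
    if (e i).1 ∈ D.1 ∧ D.2.1 (e i).1 (e i).2.1 = i then
      (Real.sqrt D.1.card)⁻¹ * sg (D.2.2 (e i).1 (e i).2.1) else 0

/-- vertices -/
noncomputable def svec (e : Fin n → Fin N × Fin m × Fin k)
    (D : Equiv.Perm (Fin N) × (Fin N → Fin m) × (Fin N → Fin k → Bool)) : E n :=
  WithLp.toLp 2 fun i =>
    if (e i).2.1 = D.2.1 (e i).1 then
      w (D.1 (e i).1) * sg (D.2.2 (e i).1 (e i).2.2) else 0

lemma inner_eq (x y : E n) : ⟪x, y⟫ = ∑ i, x i * y i := by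
  rw [PiLp.inner_apply]
  refine Finset.sum_congr rfl fun i _ => ?_
  simp [mul_comm]

lemma sum_w_perm (σ : Equiv.Perm (Fin N)) (A : Finset (Fin N)) :
    ∑ p ∈ A, w (σ p) ≤ Real.sqrt A.card := by
  have hinj : Function.Injective (fun p : Fin N => ((σ p : Fin N) : ℕ)) :=
    Fin.val_injective.comp σ.injective
  have := sum_w_le (A.image fun p => ((σ p : Fin N) : ℕ))
  rwa [Finset.sum_image hinj.injOn, Finset.card_image_of_injective _ hinj] at this

lemma pair_le (e : Fin n → Fin N × Fin m × Fin k) (D D') :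
    ⟪tvec e D, svec e D'⟫ ≤ 1 := by
  obtain ⟨A, c, b⟩ := D
  obtain ⟨σ, d, b'⟩ := D'
  rw [inner_eq]
  set Q := Finset.univ.filter fun i : Fin n => (e i).1 ∈ A ∧ c (e i).1 (d (e i).1) = i
  have h1 : ∑ i, tvec e (A, c, b) i * svec e (σ, d, b') i ≤
      ∑ i ∈ Q, (Real.sqrt A.card)⁻¹ * w (σ (e i).1) := by
    rw [Finset.sum_filter]
    refine Finset.sum_le_sum fun i _ => ?_
    have hw := w_nonneg (σ (e i).1)
    have hs : (0 : ℝ) ≤ (Real.sqrt A.card)⁻¹ := by positivity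
    have hpos := mul_nonneg hs hw
    simp only [tvec, svec]
    by_cases hq : (e i).2.1 = d (e i).1
    · rw [hq]
      by_cases hc : (e i).1 ∈ A ∧ c (e i).1 (d (e i).1) = i
      · simp only [if_pos hc, if_true]
        refine (le_abs_self _).trans ?_
        rw [abs_mul, abs_mul, abs_mul, abs_sg, abs_sg, abs_of_nonneg hs, abs_of_nonneg hw]
        simp
      · simp only [if_neg hc]; simp
    · simp only [if_neg hq, mul_zero]
      split_ifs <;> first | exact hpos | exact le_rfl
  have h2 := sum_inj_le Q A (fun i => (e i).1) (by
      intro i hi j hj hij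
      simp only [Q, Finset.coe_filter, Finset.mem_univ, true_and, Set.mem_ofPred_eq] at hi hj
      have hij : (e i).1 = (e j).1 := hij
      rw [← hi.2, ← hj.2, hij]) (by
      intro i hi
      simp only [Q, Finset.mem_filter] at hi
      exact hi.2.1) (fun p => (Real.sqrt A.card)⁻¹ * w (σ p)) (fun p => by
        have := w_nonneg (σ p); positivity)
  refine h1.trans (h2.trans ?_)
  rw [← Finset.mul_sum]
  have h3 := sum_w_perm σ A
  rcases A.eq_empty_or_nonempty with rfl | hA
  · simp
  · have : 0 < Real.sqrt A.card := Real.sqrt_pos.2 (by exact_mod_cast hA.card_pos)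
    rw [inv_mul_le_iff₀ this]; linarith

lemma tvec_norm (e : Fin n → Fin N × Fin m × Fin k) (D) :
    ‖tvec e D‖ ≤ Real.sqrt m := by
  obtain ⟨A, c, b⟩ := D
  refine Real.le_sqrt_of_sq_le ?_
  rw [EuclideanSpace.norm_sq_eq]
  set Q := Finset.univ.filter fun i : Fin n => (e i).1 ∈ A ∧ c (e i).1 (e i).2.1 = i
  have h1 : ∑ i, ‖tvec e (A, c, b) i‖ ^ 2 = ∑ i ∈ Q, ((A.card : ℝ))⁻¹ := by
    rw [Finset.sum_filter]
    refine Finset.sum_congr rfl fun i _ => ?_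
    simp only [tvec]
    split_ifs
    · rw [Real.norm_eq_abs, sq_abs, mul_pow, sg_sq, inv_pow, Real.sq_sqrt (by positivity), mul_one]
    · simp
  have h2 := sum_inj_le Q (A ×ˢ (Finset.univ : Finset (Fin m))) (fun i => ((e i).1, (e i).2.1)) (by
      intro i hi j hj hij
      simp only [Q, Finset.coe_filter, Finset.mem_univ, true_and, Set.mem_ofPred_eq] at hi hj
      simp only [Prod.mk.injEq] at hij
      rw [← hi.2, ← hj.2, hij.1, hij.2]) (by
      intro i hi
      simp only [Q, Finset.mem_filter] at hi
      simp [hi.2.1]) (fun p => ((A.card : ℝ))⁻¹) (fun p => by positivity)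
  rw [h1]
  refine h2.trans ?_
  simp only [Finset.sum_const, Finset.card_product, Finset.card_univ, Fintype.card_fin, nsmul_eq_mul]
  push_cast
  rcases A.eq_empty_or_nonempty with rfl | hA
  · simp
  · have : (0 : ℝ) < A.card := by exact_mod_cast hA.card_pos
    field_simp; exact le_rfl

lemma svec_norm (e : Fin n → Fin N × Fin m × Fin k) (he : Function.Injective e) (D) :
    ‖svec e D‖ ≤ Real.sqrt (k * (1 + Real.log N)) := by
  obtain ⟨σ, d, b⟩ := D
  refine Real.le_sqrt_of_sq_le ?_
  rw [EuclideanSpace.norm_sq_eq]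
  set Q := Finset.univ.filter fun i : Fin n => (e i).2.1 = d (e i).1
  have h1 : ∑ i, ‖svec e (σ, d, b) i‖ ^ 2 = ∑ i ∈ Q, w (σ (e i).1) ^ 2 := by
    rw [Finset.sum_filter]
    refine Finset.sum_congr rfl fun i _ => ?_
    simp only [svec]
    split_ifs
    · rw [Real.norm_eq_abs, sq_abs, mul_pow, sg_sq, mul_one]
    · simp
  have h2 := sum_inj_le Q ((Finset.univ : Finset (Fin N)) ×ˢ (Finset.univ : Finset (Fin k)))
    (fun i => ((e i).1, (e i).2.2)) (by
      intro i hi j hj hij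
      simp only [Q, Finset.coe_filter, Finset.mem_univ, true_and, Set.mem_ofPred_eq] at hi hj
      simp only [Prod.mk.injEq] at hij
      apply he
      refine Prod.ext hij.1 (Prod.ext ?_ hij.2)
      rw [hi, hj, hij.1]) (by simp) (fun p => w (σ p.1) ^ 2) (fun p => by positivity)
  rw [h1]
  refine h2.trans ?_
  rw [Finset.sum_product]
  simp only [Finset.sum_const, Finset.card_univ, Fintype.card_fin, nsmul_eq_mul]
  rw [← Finset.mul_sum, Equiv.sum_comp σ (fun p : Fin N => w p ^ 2),
    ← Finset.sum_range (fun i => w i ^ 2)]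
  exact mul_le_mul_of_nonneg_left (sum_w_sq N) (by positivity)

/-- splitting a sum over coordinates into blocks -/
lemma block_sum (e : Fin n → Fin N × Fin m × Fin k) (g : Fin N → Fin m → Fin n → ℝ) :
    ∑ p, ∑ q, ∑ i, (if (e i).1 = p ∧ (e i).2.1 = q then g p q i else 0) =
      ∑ i, g (e i).1 (e i).2.1 i := by
  have : ∀ p, ∑ q, ∑ i, (if (e i).1 = p ∧ (e i).2.1 = q then g p q i else 0) =
      ∑ i, ∑ q, (if (e i).1 = p ∧ (e i).2.1 = q then g p q i else 0) := fun p => Finset.sum_comm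
  simp only [this]
  rw [Finset.sum_comm]
  refine Finset.sum_congr rfl fun i _ => ?_
  simp [ite_and]

lemma dual (hn : 0 < n) (hm : 0 < m) (e : Fin n → Fin N × Fin m × Fin k)
    (he : Function.Injective e)
    (x : E n) (hx : ∀ D, ⟪tvec e D, x⟫ ≤ 1) (y : E n) : ∃ D, ⟪y, x⟫ ≤ ⟪y, svec e D⟫ := by
  have : Nonempty (Fin n) := ⟨⟨0, hn⟩⟩
  have : Nonempty (Fin m) := ⟨⟨0, hm⟩⟩
  let v : Fin N → Fin m → Fin n → ℝ := fun p q i =>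
    if (e i).1 = p ∧ (e i).2.1 = q then |x i| else 0
  have hv0 : ∀ p q i, 0 ≤ v p q i := fun p q i => by
    simp only [v]; split_ifs <;> simp
  have hex : ∀ p q, ∃ i, ∀ i', v p q i' ≤ v p q i := fun p q => Finite.exists_max _
  choose c hc using hex
  let M : Fin N → Fin m → ℝ := fun p q => v p q (c p q)
  have hM0 : ∀ p q, 0 ≤ M p q := fun p q => hv0 _ _ _
  have hMi : ∀ i, |x i| ≤ M (e i).1 (e i).2.1 := fun i => by
    have := hc (e i).1 (e i).2.1 i
    simpa [v, M] using this
  let u : Fin N → ℝ := fun p => ∑ q, M p q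
  have hu0 : ∀ p, 0 ≤ u p := fun p => Finset.sum_nonneg fun q _ => hM0 p q
  have hu : ∀ A : Finset (Fin N), ∑ p ∈ A, u p ≤ Real.sqrt A.card := by
    intro A
    have h1 := hx (A, c, fun p q => decide (0 ≤ x (c p q)))
    rw [inner_eq] at h1
    have h2 : ∑ i, tvec e (A, c, fun p q => decide (0 ≤ x (c p q))) i * x i =
        (Real.sqrt A.card)⁻¹ * ∑ p ∈ A, u p := by
      have h3 : ∑ p ∈ A, u p = ∑ p, ∑ q, ∑ i, (if (e i).1 = p ∧ (e i).2.1 = q then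
          (if p ∈ A ∧ c p q = i then |x i| else 0) else 0) := by
        have hA1 : ∑ p ∈ A, u p = ∑ p, if p ∈ A then u p else 0 := by simp
        rw [hA1]
        refine Finset.sum_congr rfl fun p _ => ?_
        by_cases hp : p ∈ A
        · simp only [hp, if_true, true_and, u]
          refine Finset.sum_congr rfl fun q _ => ?_
          rw [Finset.sum_eq_single (c p q)]
          · simp [M, v]
          · intro i _ hi
            simp [Ne.symm hi]
          · simp
        · simp [hp]
      rw [h3, block_sum, Finset.mul_sum]
      refine Finset.sum_congr rfl fun i _ => ?_
      simp only [tvec]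
      split_ifs with h
      · rw [h.2, mul_assoc, sg_mul]
      · simp
    rw [h2] at h1
    rcases A.eq_empty_or_nonempty with rfl | hA
    · simp
    · have : 0 < Real.sqrt A.card := Real.sqrt_pos.2 (by exact_mod_cast hA.card_pos)
      rw [inv_mul_le_iff₀ this] at h1; linarith
  let Y : Fin N → Fin m → ℝ := fun p q => ∑ i, if (e i).1 = p ∧ (e i).2.1 = q then |y i| else 0
  have hexq : ∀ p, ∃ q, ∀ q', Y p q' ≤ Y p q := fun p => Finite.exists_max _
  choose d hd using hexq
  let z : Fin N → ℝ := fun p => Y p (d p)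
  have hz : ∀ p, 0 ≤ z p := fun p => Finset.sum_nonneg fun i _ => by split_ifs <;> simp
  obtain ⟨σ, hσ⟩ := greedy u z hz hu
  classical
  refine ⟨(σ, d, fun p j => decide (∃ i, e i = (p, d p, j) ∧ 0 ≤ y i)), ?_⟩
  have hL : ⟪y, x⟫ ≤ ∑ p, u p * z p := by
    rw [inner_eq]
    calc ∑ i, y i * x i ≤ ∑ i, M (e i).1 (e i).2.1 * |y i| := by
          refine Finset.sum_le_sum fun i _ => ?_
          refine (le_abs_self _).trans ?_
          rw [abs_mul, mul_comm]
          exact mul_le_mul_of_nonneg_right (hMi i) (abs_nonneg _)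
      _ = ∑ p, ∑ q, M p q * Y p q := by
          rw [← block_sum e (fun p q i => M p q * |y i|)]
          refine Finset.sum_congr rfl fun p _ => Finset.sum_congr rfl fun q _ => ?_
          simp only [Y, Finset.mul_sum, mul_ite, mul_zero]
      _ ≤ ∑ p, u p * z p := by
          refine Finset.sum_le_sum fun p _ => ?_
          simp only [u, Finset.sum_mul]
          exact Finset.sum_le_sum fun q _ => mul_le_mul_of_nonneg_left (hd p q) (hM0 p q)
  have hRt : ∑ p, w (σ p) * z p =
      ⟪y, svec e (σ, d, fun p j => decide (∃ i, e i = (p, d p, j) ∧ 0 ≤ y i))⟫ := by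
    rw [inner_eq]
    have h3 : ∑ p, w (σ p) * z p = ∑ p, ∑ q, ∑ i, (if (e i).1 = p ∧ (e i).2.1 = q then
          (if q = d p then w (σ p) * |y i| else 0) else 0) := by
      refine Finset.sum_congr rfl fun p _ => ?_
      rw [Finset.sum_eq_single (d p)]
      · simp only [z, Y, Finset.mul_sum, mul_ite, mul_zero, if_true]
      · intro q _ hq
        simp [hq]
      · simp
    rw [h3, block_sum]
    refine Finset.sum_congr rfl fun i _ => ?_
    simp only [svec]
    split_ifs with h
    · have h5 : (∃ i', e i' = ((e i).1, d (e i).1, (e i).2.2) ∧ 0 ≤ y i') ↔ 0 ≤ y i := by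
        have h6 : ((e i).1, d (e i).1, (e i).2.2) = e i := by rw [← h]
        rw [h6]
        constructor
        · rintro ⟨i', h7, h8⟩
          rwa [← he h7]
        · intro h8
          exact ⟨i, rfl, h8⟩
      simp only [h5]
      rw [← sg_mul]; ring
    · simp
  linarith

end FLMAux
namespace FLMAux
open scoped RealInnerProductSpace

lemma logb_le {c : ℕ} {B : ℝ} (hB : 0 ≤ B) (h : (c : ℝ) ≤ Real.exp (Real.log 2 * B)) :
    Real.logb 2 c ≤ B := by
  have h2 : 0 < Real.log 2 := Real.log_pos (by norm_num)
  rcases Nat.eq_zero_or_pos c with rfl | hc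
  · simpa using hB
  · have hc' : (0 : ℝ) < c := by exact_mod_cast hc
    rw [Real.logb, div_le_iff₀ h2, mul_comm]
    exact (Real.log_le_iff_le_exp hc').2 h

lemma pow_exp {x L : ℝ} (hx : 0 < x) (hL : Real.log x ≤ L) (j : ℕ) :
    x ^ j ≤ Real.exp (j * L) := by
  rw [Real.exp_nat_mul]
  refine pow_le_pow_left₀ hx.le ?_ j
  rw [← Real.log_le_iff_le_exp hx]
  exact hL

lemma construct {n N m k : ℕ} (hn : 2 ≤ n) (hN : 0 < N) (hm : 0 < m)
    (hNn : N ≤ n) (hmn : m ≤ n) (hcard : n ≤ N * (m * k)) :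
    ∃ (S : Finset (E n)) (P : Set (E n)) (V : Set (E n)) (Fs : Set (Set (E n))) (r R : ℝ),
        P = convexHull ℝ (S : Set (E n)) ∧
        (0 : E n) ∈ interior P ∧
        V = Set.extremePoints ℝ P ∧
        Fs = {G : Set (E n) |
          IsExposed ℝ P G ∧ Module.finrank ℝ (affineSpan ℝ G).direction = n - 1} ∧
        0 < r ∧ Metric.closedBall 0 r ⊆ P ∧ P ⊆ Metric.closedBall 0 R ∧
        V.Finite ∧ Fs.Finite ∧
        Real.logb 2 (Fs.ncard) ≤ 2 * (N * m * (1 + Real.log n)) ∧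
        Real.logb 2 (V.ncard) ≤ 3 * (N * (1 + Real.log n)) + N * k ∧
        (R / r) ^ 2 ≤ m * k * (1 + Real.log n) := by
  classical
  obtain ⟨⟨e, he⟩⟩ : Nonempty (Fin n ↪ Fin N × Fin m × Fin k) :=
    Function.Embedding.nonempty_of_card_le (by simpa using hcard)
  have hn1 : (1 : ℝ) ≤ n := by exact_mod_cast (by omega : 1 ≤ n)
  have hl0 : 0 ≤ Real.log n := Real.log_nonneg hn1
  have hm0 : (0 : ℝ) < m := by exact_mod_cast hm
  have hN0 : (0 : ℝ) < N := by exact_mod_cast hN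
  have hm1 : (1 : ℝ) ≤ m := by exact_mod_cast hm
  have hlN : Real.log N ≤ Real.log n := Real.log_le_log hN0 (by exact_mod_cast hNn)
  have hlm : Real.log m ≤ Real.log n := Real.log_le_log hm0 (by exact_mod_cast hmn)
  have hlN0 : 0 ≤ Real.log N := Real.log_nonneg (by exact_mod_cast hN)
  have hl2 : (0.69 : ℝ) < Real.log 2 := by have := Real.log_two_gt_d9; linarith
  have : Nonempty (Fin n) := ⟨⟨0, by omega⟩⟩
  let S : Finset (E n) := Finset.univ.image (svec e)
  let T : Finset (E n) := Finset.univ.image (tvec e)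
  have hSc : S.card ≤ N.factorial * (m ^ N * (2 ^ k) ^ N) := by
    refine Finset.card_image_le.trans ?_
    simp [Fintype.card_perm]
  have hTc : T.card ≤ 2 ^ N * ((n ^ m) ^ N * (2 ^ m) ^ N) := by
    refine Finset.card_image_le.trans ?_
    simp
  have hsm : 0 < Real.sqrt m := Real.sqrt_pos.2 hm0
  obtain ⟨P, V, Fs, h1, h2, h3, h4, h5, h6, h7, h8, h9, h10⟩ :=
    polytope_main hn S T (Finset.univ_nonempty.image _)
      (by
        intro s hs t ht
        obtain ⟨D', _, rfl⟩ := Finset.mem_image.1 hs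
        obtain ⟨D, _, rfl⟩ := Finset.mem_image.1 ht
        exact pair_le e D D')
      (by
        intro x hx y
        obtain ⟨D, hD⟩ := dual (by omega) hm e he x
          (fun D => hx _ (Finset.mem_image_of_mem _ (Finset.mem_univ D))) y
        exact ⟨_, Finset.mem_image_of_mem _ (Finset.mem_univ D), hD⟩)
      (Real.sqrt m)⁻¹ (Real.sqrt (k * (1 + Real.log N))) (by positivity)
      (by
        intro t ht
        obtain ⟨D, _, rfl⟩ := Finset.mem_image.1 ht
        rw [mul_inv_le_iff₀ hsm, one_mul]
        exact tvec_norm e D)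
      (by
        intro s hs
        obtain ⟨D, _, rfl⟩ := Finset.mem_image.1 hs
        exact svec_norm e he D)
  refine ⟨S, P, V, Fs, _, _, h1, h2, h3, h4, by positivity, h5, h6, h7, h8, ?_, ?_, ?_⟩
  · refine logb_le (by positivity) ?_
    have hc : (Fs.ncard : ℝ) ≤ 2 ^ N * ((n : ℝ) ^ (m * N) * 2 ^ (m * N)) := by
      have := h10.trans hTc
      rw [← pow_mul, ← pow_mul] at this
      exact_mod_cast this
    refine hc.trans ?_
    have e1 := pow_exp (x := 2) (by norm_num) le_rfl N
    have e2 := pow_exp (x := 2) (by norm_num) le_rfl (m * N)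
    have e3 := pow_exp (x := (n : ℝ)) (by linarith) le_rfl (m * N)
    calc (2 : ℝ) ^ N * ((n : ℝ) ^ (m * N) * 2 ^ (m * N))
        ≤ Real.exp (N * Real.log 2) * (Real.exp ((m * N : ℕ) * Real.log n) *
            Real.exp ((m * N : ℕ) * Real.log 2)) := by gcongr
      _ = Real.exp (N * Real.log 2 + ((m * N : ℕ) * Real.log n + (m * N : ℕ) * Real.log 2)) := by
          rw [Real.exp_add, Real.exp_add]
      _ ≤ _ := by
          apply Real.exp_le_exp.2
          push_cast
          have a1 : (N : ℝ) * Real.log 2 ≤ m * N * Real.log 2 := by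
            have : (0 : ℝ) ≤ N * Real.log 2 := by positivity
            nlinarith
          have a2 : (m : ℝ) * N * Real.log n * 1 ≤ m * N * Real.log n * (2 * Real.log 2) :=
            mul_le_mul_of_nonneg_left (by linarith) (by positivity)
          nlinarith
  · refine logb_le (by positivity) ?_
    have hc : (V.ncard : ℝ) ≤ (N : ℝ) ^ N * ((m : ℝ) ^ N * 2 ^ (k * N)) := by
      have h := h9.trans hSc
      rw [← pow_mul] at h
      have := h.trans (Nat.mul_le_mul_right _ (Nat.factorial_le_pow N))
      exact_mod_cast this
    refine hc.trans ?_
    have e1 := pow_exp hN0 hlN N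
    have e2 := pow_exp (x := 2) (by norm_num) le_rfl (k * N)
    have e3 := pow_exp hm0 hlm N
    calc (N : ℝ) ^ N * ((m : ℝ) ^ N * 2 ^ (k * N))
        ≤ Real.exp (N * Real.log n) * (Real.exp (N * Real.log n) *
            Real.exp ((k * N : ℕ) * Real.log 2)) := by gcongr
      _ = Real.exp (N * Real.log n + (N * Real.log n + (k * N : ℕ) * Real.log 2)) := by
          rw [Real.exp_add, Real.exp_add]
      _ ≤ _ := by
          apply Real.exp_le_exp.2
          push_cast
          have a2 : (N : ℝ) * Real.log n * 2 ≤ N * Real.log n * (3 * Real.log 2) :=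
            mul_le_mul_of_nonneg_left (by linarith) (by positivity)
          have a3 : 0 ≤ (N : ℝ) * Real.log 2 := by positivity
          nlinarith
  · rw [div_inv_eq_mul, mul_pow, Real.sq_sqrt (by positivity), Real.sq_sqrt hm0.le]
    have : (k : ℝ) * m * (1 + Real.log N) ≤ k * m * (1 + Real.log n) := by gcongr
    linarith

lemma log_bound {η : ℝ} (hη : 0 < η) {x : ℝ} (hx : 1 ≤ x) :
    1 + Real.log x ≤ (1 + 1 / η) * x ^ η := by
  have h1 := Real.log_le_rpow_div (by linarith : 0 ≤ x) hη
  have h2 := Real.one_le_rpow hx hη.le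
  have : (1 + 1 / η) * x ^ η = x ^ η + x ^ η / η := by ring
  linarith

lemma log_bound2 {x C : ℝ} (hx : 1 < x) (hC : 1 ≤ C) :
    1 + Real.log x ≤ 2 * x ^ (C / Real.sqrt (Real.log x)) := by
  have hl : 0 < Real.log x := Real.log_pos hx
  have hs : 0 < Real.sqrt (Real.log x) := Real.sqrt_pos.2 hl
  have hsq := Real.sq_sqrt hl.le
  rw [Real.rpow_def_of_pos (by linarith)]
  have h1 : Real.log x * (C / Real.sqrt (Real.log x)) = C * Real.sqrt (Real.log x) := by
    field_simp; rw [hsq]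
  rw [h1]
  have h2 : Real.exp (Real.sqrt (Real.log x)) ≤ Real.exp (C * Real.sqrt (Real.log x)) :=
    Real.exp_le_exp.2 (by nlinarith)
  have h3 := Real.quadratic_le_exp_of_nonneg hs.le
  nlinarith

end FLMAux

set_option maxHeartbeats 1000000


/-- **Theorem 1.3, part 2.** Let `a ∈ (0,1)` be irrational and `δ ∈ (0,1)`. There is a
constant `C > 0` depending only on `a` and `δ`, and for every `n ≥ 2` a polytope
`P_n ⊂ ℝ^n` (the convex hull of a finite set, with the origin in its interior, with
vertex set `V`, facet set `ℱ` -- the exposed faces whose affine span has dimension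
`n-1` -- and with `r·B₂ⁿ ⊆ P_n ⊆ R·B₂ⁿ`), such that `log₂|ℱ| ≤ C·n^{1-a}`,
`log₂|V| ≤ C·n^{a+δ(1-a)+C/√(log n)}` and `(R/r)² ≤ C·n^{1-δ+a}`; consequently
`log₂|V| · log₂|ℱ| · (R/r)² ≤ C³·n^{2+a(1-δ)+C/√(log n)}`. -/
theorem flm_near_saturation_irrational (a : ℝ) (ha : a ∈ Set.Ioo (0 : ℝ) 1)
    (hirr : Irrational a) (δ : ℝ) (hδ : δ ∈ Set.Ioo (0 : ℝ) 1) :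
    ∃ C : ℝ, 0 < C ∧ ∀ n : ℕ, 2 ≤ n →
      ∃ (S : Finset (EuclideanSpace ℝ (Fin n))) (P : Set (EuclideanSpace ℝ (Fin n)))
        (V : Set (EuclideanSpace ℝ (Fin n))) (Fs : Set (Set (EuclideanSpace ℝ (Fin n))))
        (r R : ℝ),
        P = convexHull ℝ (S : Set (EuclideanSpace ℝ (Fin n))) ∧
        (0 : EuclideanSpace ℝ (Fin n)) ∈ interior P ∧
        V = Set.extremePoints ℝ P ∧
        Fs = {G : Set (EuclideanSpace ℝ (Fin n)) |
          IsExposed ℝ P G ∧ Module.finrank ℝ (affineSpan ℝ G).direction = n - 1} ∧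
        0 < r ∧ Metric.closedBall 0 r ⊆ P ∧ P ⊆ Metric.closedBall 0 R ∧
        V.Finite ∧ Fs.Finite ∧
        Real.logb 2 (Fs.ncard) ≤ C * (n : ℝ) ^ (1 - a) ∧
        Real.logb 2 (V.ncard) ≤
          C * (n : ℝ) ^ (a + δ * (1 - a) + C / Real.sqrt (Real.log n)) ∧
        (R / r) ^ 2 ≤ C * (n : ℝ) ^ (1 - δ + a) ∧
        Real.logb 2 (V.ncard) * Real.logb 2 (Fs.ncard) * (R / r) ^ 2 ≤
          C ^ 3 * (n : ℝ) ^ (2 + a * (1 - δ) + C / Real.sqrt (Real.log n)) := by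
  obtain ⟨ha0, ha1⟩ := ha
  obtain ⟨hδ0, hδ1⟩ := hδ
  set γ := (1 - δ) * (1 - a) with hγ
  set β := δ * (1 - a) with hβ
  set η := a * (1 - δ) with hη
  have hγ0 : 0 < γ := mul_pos (by linarith) (by linarith)
  have hβ0 : 0 < β := mul_pos hδ0 (by linarith)
  have hη0 : 0 < η := mul_pos ha0 (by linarith)
  have hγ1 : γ ≤ 1 := by nlinarith
  have hβ1 : β ≤ 1 := by nlinarith
  set K := 2 + 1 / γ with hK
  have hK0 : 2 ≤ K := by have : 0 < 1 / γ := by positivity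
                         linarith
  set J := 1 + 1 / η with hJ
  have hJ0 : 1 ≤ J := by have : 0 < 1 / η := by positivity
                         linarith
  set C := 24 * K * J with hC
  have hKJ : K ≤ K * J := le_mul_of_one_le_right (by linarith) hJ0
  have hC1 : 24 ≤ C := by nlinarith
  refine ⟨C, by linarith, fun n hn => ?_⟩
  have hn2 : (2 : ℝ) ≤ n := by exact_mod_cast hn
  have hn1 : (1 : ℝ) ≤ n := by linarith
  have hn0 : (0 : ℝ) < n := by linarith
  set x : ℝ := (n : ℝ) with hx
  set L := 1 + Real.log x with hL
  have hL1 : 1 ≤ L := by have := Real.log_nonneg hn1; linarith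
  have hL0 : 0 < L := by linarith
  have hLγ : L ≤ (1 + 1 / γ) * x ^ γ := FLMAux.log_bound hγ0 hn1
  have hLη : L ≤ J * x ^ η := FLMAux.log_bound hη0 hn1
  have hLC : L ≤ 2 * x ^ (C / Real.sqrt (Real.log x)) :=
    FLMAux.log_bound2 (by linarith) (by linarith)
  have hxa := Real.one_le_rpow hn1 ha0.le
  have hxb := Real.one_le_rpow hn1 hβ0.le
  have hxg : 0 < x ^ γ := by positivity
  have up : ∀ y : ℝ, 0 ≤ y → (⌈y⌉₊ : ℝ) ≤ y + 1 := fun y hy => (Nat.ceil_lt_add_one hy).le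
  set N := ⌈x ^ β⌉₊ with hN
  set m := ⌈x ^ γ / L⌉₊ with hm
  set k := ⌈x ^ a * L⌉₊ with hk
  have hNl : x ^ β ≤ N := Nat.le_ceil _
  have hml : x ^ γ / L ≤ m := Nat.le_ceil _
  have hkl : x ^ a * L ≤ k := Nat.le_ceil _
  have hNu : (N : ℝ) ≤ 2 * x ^ β := by
    have := up (x ^ β) (by linarith)
    linarith
  have hmu : (m : ℝ) ≤ K * (x ^ γ / L) := by
    have h1 := up (x ^ γ / L) (by positivity)
    have h2 : 1 ≤ (1 + 1 / γ) * (x ^ γ / L) := by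
      rw [← mul_div_assoc, le_div_iff₀ hL0]; linarith
    have h3 : K * (x ^ γ / L) = x ^ γ / L + (1 + 1 / γ) * (x ^ γ / L) := by rw [hK]; ring
    linarith
  have hku : (k : ℝ) ≤ 2 * (x ^ a * L) := by
    have := up (x ^ a * L) (by positivity)
    have h2 : 1 ≤ x ^ a * L := one_le_mul_of_one_le_of_one_le hxa hL1
    linarith
  have hle1 : ∀ t : ℝ, t ≤ 1 → x ^ t ≤ x := fun t ht => by
    simpa using Real.rpow_le_rpow_of_exponent_le hn1 ht
  have hNn : N ≤ n := Nat.ceil_le.2 (hle1 β hβ1)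
  have hmn : m ≤ n := Nat.ceil_le.2 ((div_le_self hxg.le hL1).trans (hle1 γ hγ1))
  have hNp : 0 < N := Nat.ceil_pos.2 (by positivity)
  have hmp : 0 < m := Nat.ceil_pos.2 (by positivity)
  have hcard : n ≤ N * (m * k) := by
    have h1 : x ≤ N * (m * k) := by
      calc x = x ^ β * ((x ^ γ / L) * (x ^ a * L)) := by
            have : x ^ β * ((x ^ γ / L) * (x ^ a * L)) = x ^ β * x ^ γ * x ^ a := by
              field_simp
            rw [this, ← Real.rpow_add hn0, ← Real.rpow_add hn0]
            have : β + γ + a = 1 := by rw [hβ, hγ]; ring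
            rw [this, Real.rpow_one]
        _ ≤ N * (m * k) := by gcongr
    rw [hx] at h1
    exact_mod_cast h1
  obtain ⟨S, P, V, Fs, r, R, h1, h2, h3, h4, h5, h6, h7, h8, h9, hF, hV, hR⟩ :=
    FLMAux.construct hn hNp hmp hNn hmn hcard
  have hF' : Real.logb 2 (Fs.ncard) ≤ C * x ^ (1 - a) := by
    refine hF.trans ?_
    calc 2 * (N * m * L) ≤ 2 * (2 * x ^ β * (K * (x ^ γ / L)) * L) := by gcongr
      _ = 4 * K * (x ^ β * x ^ γ) := by field_simp; ring
      _ = 4 * K * x ^ (1 - a) := by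
          rw [← Real.rpow_add hn0]
          congr 2
          rw [hβ, hγ]; ring
      _ ≤ C * x ^ (1 - a) := by
          refine mul_le_mul_of_nonneg_right ?_ (by positivity)
          rw [hC]; linarith
  have hV' : Real.logb 2 (V.ncard) ≤ C * x ^ (a + β + C / Real.sqrt (Real.log x)) := by
    refine hV.trans ?_
    have hNL : (N : ℝ) * L ≤ N * (x ^ a * L) := by
      exact mul_le_mul_of_nonneg_left (le_mul_of_one_le_left hL0.le hxa) (by positivity)
    have hNk : (N : ℝ) * k ≤ N * (2 * (x ^ a * L)) := by gcongr
    calc 3 * (N * L) + N * k ≤ 5 * (N * (x ^ a * L)) := by linarith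
      _ ≤ 5 * (2 * x ^ β * (x ^ a * (2 * x ^ (C / Real.sqrt (Real.log x))))) := by gcongr
      _ = 20 * (x ^ a * x ^ β * x ^ (C / Real.sqrt (Real.log x))) := by ring
      _ = 20 * x ^ (a + β + C / Real.sqrt (Real.log x)) := by
          rw [Real.rpow_add hn0, Real.rpow_add hn0]
      _ ≤ _ := mul_le_mul_of_nonneg_right (by linarith) (by positivity)
  have hR' : (R / r) ^ 2 ≤ C * x ^ (1 - δ + a) := by
    refine hR.trans ?_
    calc m * k * L ≤ (K * (x ^ γ / L)) * (2 * (x ^ a * L)) * (J * x ^ η) := by gcongr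
      _ = 2 * K * J * (x ^ γ * x ^ a * x ^ η) := by field_simp
      _ = 2 * K * J * x ^ (1 - δ + a) := by
          rw [← Real.rpow_add hn0, ← Real.rpow_add hn0]
          congr 2
          rw [hγ, hη]; ring
      _ ≤ _ := by
          refine mul_le_mul_of_nonneg_right ?_ (by positivity)
          rw [hC]; linarith
  have lb0 : ∀ c : ℕ, 0 ≤ Real.logb 2 (c : ℝ) := fun c => by
    rcases Nat.eq_zero_or_pos c with rfl | hc
    · simp
    · exact Real.logb_nonneg (by norm_num) (by exact_mod_cast hc)
  refine ⟨S, P, V, Fs, r, R, h1, h2, h3, h4, h5, h6, h7, h8, h9, hF', hV', hR', ?_⟩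
  calc Real.logb 2 (V.ncard) * Real.logb 2 (Fs.ncard) * (R / r) ^ 2
      ≤ (C * x ^ (a + β + C / Real.sqrt (Real.log x))) * (C * x ^ (1 - a)) *
          (C * x ^ (1 - δ + a)) := by
        have := lb0 V.ncard
        have := lb0 Fs.ncard
        gcongr
    _ = C ^ 3 * (x ^ (a + β + C / Real.sqrt (Real.log x)) * x ^ (1 - a) * x ^ (1 - δ + a)) := by
        ring
    _ = _ := by
        rw [← Real.rpow_add hn0, ← Real.rpow_add hn0]
        congr 2
        rw [hβ, hη]; ring
end
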